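/- Let m ≥ 2, ρ ∈ (0,1), a_1,…,a_m ∈ ℝ and let p = (p_1,…,p_m) be a probability vector with every p_j > 0. Let μ_ρ be the homogeneous self-similar measure of the IFS {f_j(x) = ρx + a_j}_{j=1}^m, assume the IFS satisfies the strong separation condition, and let φ ∈ C²(ℝ) with φ''(t) > 0 for all t. Then for every strictly increasing sequence (s_n)_{n≥1} of positive integers, for μ_ρ-almost every x the sequence (s_n φ(x))_{n≥1} is equidistributed modulo 1; in particular, for μ_ρ-almost every x, φ(x) is normal in every integer base b ≥ 2. -/

import Mathlib

open MeasureTheory Real Filter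

/-- A sequence `(x n)_{n ≥ 1}` of real numbers is equidistributed modulo 1: for every
subinterval `[a, b] ⊆ [0, 1]`, the proportion of indices `1 ≤ n ≤ N` whose fractional
part lies in `[a, b]` tends to `b - a`. -/
def EquidistributedMod1 (x : ℕ → ℝ) : Prop :=
  ∀ a b : ℝ, 0 ≤ a → a ≤ b → b ≤ 1 →
    Tendsto (fun N : ℕ =>
        (((Finset.Icc 1 N).filter fun n => Int.fract (x n) ∈ Set.Icc a b).card : ℝ) / N)
      atTop (nhds (b - a))

open scoped ENNReal

/-- The additive character `e(x) = exp(2 π i x)`. -/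
noncomputable def ee (x : ℝ) : ℂ := Complex.exp (((2 * π * x : ℝ) : ℂ) * Complex.I)

lemma ee_norm (x : ℝ) : ‖ee x‖ = 1 := Complex.norm_exp_ofReal_mul_I _

lemma ee_add (x y : ℝ) : ee (x + y) = ee x * ee y := by
  unfold ee; rw [← Complex.exp_add]; congr 1; push_cast; ring

lemma ee_cont : Continuous ee := by unfold ee; fun_prop

lemma ee_zero : ee 0 = 1 := by simp [ee]

lemma ee_int (n : ℤ) : ee n = 1 := by
  unfold ee; rw [Complex.exp_eq_one_iff]; exact ⟨n, by push_cast; ring⟩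

lemma ee_conj (x : ℝ) : (starRingEnd ℂ) (ee x) = ee (-x) := by
  unfold ee
  rw [← Complex.exp_conj]; congr 1
  rw [map_mul, Complex.conj_ofReal, Complex.conj_I]; push_cast; ring

lemma ee_sub_le (x y : ℝ) : ‖ee x - ee y‖ ≤ 2 * π * |x - y| := by
  have h : ee x - ee y = ee y * (ee (x - y) - 1) := by
    rw [mul_sub, ← ee_add]; simp
  rw [h, norm_mul, ee_norm, one_mul]
  unfold ee
  have := Real.norm_exp_I_mul_ofReal_sub_one_le (x := 2 * π * (x - y))
  rw [mul_comm Complex.I] at this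
  refine this.trans ?_
  rw [Real.norm_eq_abs, abs_mul, abs_of_pos (by positivity : 0 < 2 * π)]

lemma lint_cover (lam : Measure ℝ) (G : ℝ → ℝ≥0∞) (c l : ℝ) (B : ℕ) (hB : 0 < B) (hl : 0 ≤ l)
    (X : ℝ≥0∞) (hX : ∀ c', ∫⁻ y in Set.Icc c' (c' + l / B), G y ∂lam ≤ X) :
    ∫⁻ y in Set.Icc c (c + l), G y ∂lam ≤ B * X := by
  have hB0 : (0:ℝ) < B := by exact_mod_cast hB
  have hcover : Set.Icc c (c + l) ⊆ ⋃ i : Fin B,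
      Set.Icc (c + (i:ℕ) * (l / B)) (c + (i:ℕ) * (l / B) + l / B) := by
    intro y hy
    suffices h : ∃ i : ℕ, i < B ∧ y ∈ Set.Icc (c + i * (l / B)) (c + i * (l / B) + l / B) by
      obtain ⟨i, hi, h⟩ := h
      exact Set.mem_iUnion.2 ⟨⟨i, hi⟩, h⟩
    rcases hl.eq_or_lt with hl0 | hl0
    · refine ⟨0, by exact_mod_cast hB0, ?_⟩
      subst hl0
      simpa using hy
    by_cases hy2 : y = c + l
    · refine ⟨B - 1, ?_, ?_⟩
      · have : 0 < B := by exact_mod_cast hB0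
        omega
      · have : 1 ≤ B := by exact_mod_cast hB0
        have e : ((B - 1 : ℕ) : ℝ) * (l / B) + l / B = l := by
          push_cast [this]; field_simp; ring
        have : 0 ≤ l / B := by positivity
        constructor <;> linarith
    · have hyl : y < c + l := lt_of_le_of_ne hy.2 hy2
      have hpos : 0 < l / B := by positivity
      have hnn : 0 ≤ (y - c) / (l / B) := div_nonneg (by linarith [hy.1]) hpos.le
      refine ⟨⌊(y - c) / (l / B)⌋₊, ?_, ?_⟩
      · rw [Nat.floor_lt hnn, div_lt_iff₀ hpos]
        have : (B:ℝ) * (l / B) = l := by field_simp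
        linarith
      · have h1 := Nat.floor_le hnn
        have h2 := Nat.lt_floor_add_one ((y - c) / (l / B))
        rw [le_div_iff₀ hpos] at h1
        rw [div_lt_iff₀ hpos] at h2
        constructor <;> linarith
  calc ∫⁻ y in Set.Icc c (c + l), G y ∂lam
      ≤ ∫⁻ y in ⋃ i : Fin B,
          Set.Icc (c + (i:ℕ) * (l / B)) (c + (i:ℕ) * (l / B) + l / B), G y ∂lam :=
        lintegral_mono_set hcover
    _ ≤ ∑' i : Fin B, ∫⁻ y in
          Set.Icc (c + (i:ℕ) * (l / B)) (c + (i:ℕ) * (l / B) + l / B), G y ∂lam :=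
        lintegral_iUnion_le _ _
    _ ≤ ∑' i : Fin B, X := ENNReal.tsum_le_tsum fun i => hX _
    _ = _ := by simp

lemma key_lemma (lam : Measure ℝ) (h : ℝ → ℝ≥0∞) (hh : Measurable h) (h1 : ∀ t, h t ≤ 1)
    (η : ℝ≥0∞) (κ : ℝ) (hκ0 : 0 < κ) (hκ : κ < 1 / 4)
    (hη : ∀ t : ℝ, (∀ n : ℤ, κ ≤ |t - n|) → h t ≤ η) (β : ℝ) (hβ : 1 < β)
    (hκβ : 2 * κ * β ≤ 1 / 2) (B : ℕ) (hB : β ≤ B) (M : ℝ≥0∞) :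
    ∀ (N : ℕ) (θ : ℝ), 0 < θ →
      (∀ c l : ℝ, 0 ≤ l → l * θ * β ^ N ≤ 1 / 2 → lam (Set.Icc c (c + l)) ≤ M) →
      ∀ c l : ℝ, 0 ≤ l → l * θ ≤ 1 / 2 →
        ∫⁻ y in Set.Icc c (c + l), ∏ j ∈ Finset.range N, h (β ^ j * θ * y) ∂lam
          ≤ (1 + η * B) ^ N * M := by
  have hβ0 : 0 < β := by linarith
  have hB0 : (0:ℝ) < B := by linarith
  intro N
  induction N with
  | zero =>
    intro θ hθ hM c l hl hlθ
    simpa using hM c l hl (by simpa using hlθ)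
  | succ N ih =>
    intro θ hθ hM c l hl hlθ
    have ih' := ih (θ * β) (by positivity) (by
      intro c l hl h
      apply hM c l hl
      calc l * θ * β ^ (N+1) = l * (θ * β) * β ^ N := by ring
        _ ≤ _ := h)
    set G : ℝ → ℝ≥0∞ := fun y => ∏ j ∈ Finset.range N, h (β ^ j * (θ * β) * y) with hG
    have hGm : Measurable G := by
      apply Finset.measurable_fun_prod
      intro i _
      exact hh.comp (by fun_prop)
    have hprod : ∀ y, ∏ j ∈ Finset.range (N+1), h (β ^ j * θ * y) = G y * h (θ * y) := by
      intro y
      rw [Finset.prod_range_succ', hG]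
      simp only [pow_zero, one_mul]
      congr 1
      apply Finset.prod_congr rfl
      intro j _
      congr 1; ring
    -- the good interval
    obtain ⟨c1, hc1⟩ : ∃ c1 : ℝ, ∀ y ∈ Set.Icc c (c + l),
        h (θ * y) ≤ η ∨ y ∈ Set.Icc c1 (c1 + 2 * κ / θ) := by
      by_cases hex : ∃ y0 ∈ Set.Icc c (c+l), ∃ n : ℤ, |θ * y0 - n| < κ
      · obtain ⟨y0, hy0, n, hn⟩ := hex
        refine ⟨(n - κ) / θ, fun y hy => ?_⟩
        by_cases hy2 : ∃ k : ℤ, |θ * y - k| < κ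
        · right
          obtain ⟨k, hk⟩ := hy2
          have hd : |θ * y - θ * y0| ≤ 1 / 2 := by
            rw [← mul_sub, abs_mul, abs_of_pos hθ]
            have : |y - y0| ≤ l := by
              rw [abs_le]; constructor <;> linarith [hy.1, hy.2, hy0.1, hy0.2]
            nlinarith
          have hkn : k = n := by
            have : |(k:ℝ) - n| < 1 := by
              rw [abs_lt] at hk hn ⊢
              rw [abs_le] at hd
              constructor <;> linarith [hk.1, hk.2, hn.1, hn.2, hd.1, hd.2]
            have h3 : |k - n| < 1 := by exact_mod_cast this
            have := Int.abs_lt_one_iff.1 h3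
            omega
          subst hkn
          rw [abs_lt] at hk
          rw [← add_div]
          constructor
          · rw [div_le_iff₀ hθ]; linarith
          · rw [le_div_iff₀ hθ]; linarith
        · left
          push Not at hy2
          exact hη _ hy2
      · refine ⟨0, fun y hy => Or.inl (hη _ ?_)⟩
        push Not at hex
        exact hex y hy
    have hgood := ih' c1 (2 * κ / θ) (by positivity) (by
      have : 2 * κ / θ * (θ * β) = 2 * κ * β := by field_simp
      linarith)
    have hbad : ∀ c' : ℝ, ∫⁻ y in Set.Icc c' (c' + l / B), G y ∂lam
        ≤ (1 + η * B) ^ N * M := by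
      intro c'
      apply ih' _ _ (by positivity)
      have : l / B * (θ * β) = (l * θ) * (β / B) := by ring
      rw [this]
      have : β / B ≤ 1 := (div_le_one hB0).2 hB
      have : 0 ≤ β / B := by positivity
      nlinarith [mul_nonneg hl hθ.le]
    have hbadtot : ∫⁻ y in Set.Icc c (c + l), G y ∂lam ≤ B * ((1 + η * B) ^ N * M) :=
      lint_cover lam G c l B (by exact_mod_cast hB0) hl _ hbad
    calc ∫⁻ y in Set.Icc c (c + l), ∏ j ∈ Finset.range (N+1), h (β ^ j * θ * y) ∂lam
        = ∫⁻ y in Set.Icc c (c + l), G y * h (θ * y) ∂lam := by simp_rw [hprod]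
      _ ≤ ∫⁻ y in Set.Icc c (c + l),
            ((Set.Icc c1 (c1 + 2 * κ / θ)).indicator G y + η * G y) ∂lam := by
          apply setLIntegral_mono
          · exact (hGm.indicator measurableSet_Icc).add (hGm.const_mul _)
          · intro y hy
            rcases hc1 y hy with hy1 | hy1
            · calc G y * h _ ≤ G y * η := by gcongr
                _ = η * G y := mul_comm _ _
                _ ≤ _ := le_add_self
            · rw [Set.indicator_of_mem hy1]
              calc G y * _ ≤ G y * 1 := by gcongr; exact h1 _
                _ = G y := mul_one _
                _ ≤ _ := le_self_add
      _ = ∫⁻ y in Set.Icc c (c + l), (Set.Icc c1 (c1 + 2 * κ / θ)).indicator G y ∂lam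
            + η * ∫⁻ y in Set.Icc c (c + l), G y ∂lam := by
          rw [lintegral_add_left (hGm.indicator measurableSet_Icc), lintegral_const_mul _ hGm]
      _ ≤ (1 + η * B) ^ N * M + η * (B * ((1 + η * B) ^ N * M)) := by
          gcongr
          refine le_trans ?_ hgood
          rw [← lintegral_indicator (s := Set.Icc c1 (c1 + 2 * κ / θ)) measurableSet_Icc]
          exact setLIntegral_le_lintegral _ _
      _ = _ := by ring


lemma selfsim_apply {m : ℕ} {ρ : ℝ} {a p : Fin m → ℝ} {μ : Measure ℝ}
    (hμ : μ = ∑ j : Fin m, ENNReal.ofReal (p j) • Measure.map (fun x => ρ * x + a j) μ)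
    {s : Set ℝ} (hs : MeasurableSet s) :
    μ s = ∑ j : Fin m, ENNReal.ofReal (p j) * μ ((fun x => ρ * x + a j) ⁻¹' s) := by
  conv_lhs => rw [hμ]
  rw [Measure.finsetSum_apply]
  apply Finset.sum_congr rfl
  intro j _
  rw [Measure.smul_apply, Measure.map_apply (by fun_prop) hs, smul_eq_mul]

lemma sum_ofReal_eq_one {m : ℕ} {p : Fin m → ℝ} (hp : ∀ j, 0 < p j) (hp1 : ∑ j, p j = 1) :
    ∑ j, ENNReal.ofReal (p j) = 1 := by
  rw [← ENNReal.ofReal_sum_of_nonneg (fun j _ => (hp j).le), hp1, ENNReal.ofReal_one]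

lemma supp_K {m : ℕ} {ρ : ℝ} (hρ0 : 0 < ρ) (hρ1 : ρ < 1)
    {a p : Fin m → ℝ} (hp : ∀ j, 0 < p j) (hp1 : ∑ j, p j = 1)
    {μ : Measure ℝ} [IsProbabilityMeasure μ]
    (hμ : μ = ∑ j : Fin m, ENNReal.ofReal (p j) • Measure.map (fun x => ρ * x + a j) μ)
    {K : Set ℝ} (hKc : IsCompact K) (hKne : K.Nonempty)
    (hmaps : ∀ j, ∀ x ∈ K, ρ * x + a j ∈ K) : μ Kᶜ = 0 := by
  set V : ℝ → Set ℝ := fun r => {x | r < Metric.infDist x K} with hV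
  have hVm : ∀ r, MeasurableSet (V r) := fun r =>
    measurableSet_lt measurable_const (Metric.continuous_infDist_pt K).measurable
  have hstep : ∀ r, μ (V r) ≤ μ (V (r / ρ)) := by
    intro r
    rw [selfsim_apply hμ (hVm r)]
    calc ∑ j : Fin m, ENNReal.ofReal (p j) * μ ((fun x => ρ * x + a j) ⁻¹' (V r))
        ≤ ∑ j : Fin m, ENNReal.ofReal (p j) * μ (V (r / ρ)) := by
          gcongr with j
          intro x hx
          simp only [hV, Set.mem_preimage, Set.mem_ofPred_eq] at hx ⊢
          rw [div_lt_iff₀ hρ0]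
          obtain ⟨y, hy, hxy⟩ := hKc.exists_infDist_eq_dist hKne x
          have h1 := Metric.infDist_le_dist_of_mem (x := ρ * x + a j) (hmaps j y hy)
          have h2 : dist (ρ * x + a j) (ρ * y + a j) = dist x y * ρ := by
            rw [Real.dist_eq, Real.dist_eq]
            rw [show ρ * x + a j - (ρ * y + a j) = (x - y) * ρ by ring, abs_mul, abs_of_pos hρ0]
          rw [hxy]
          linarith
      _ = μ (V (r / ρ)) := by
          rw [← Finset.sum_mul, sum_ofReal_eq_one hp hp1, one_mul]
  have hiter : ∀ r, ∀ n : ℕ, μ (V r) ≤ μ (V (r / ρ ^ n)) := by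
    intro r n
    induction n with
    | zero => simp
    | succ n ih =>
      refine ih.trans ((hstep _).trans_eq ?_)
      rw [div_div, ← pow_succ]
  have hzero : ∀ r, 0 < r → μ (V r) = 0 := by
    intro r hr
    have hlim : Tendsto (fun n : ℕ => μ (V n)) atTop (nhds (μ (⋂ n : ℕ, V n))) := by
      apply tendsto_measure_iInter_atTop
      · exact fun n => (hVm n).nullMeasurableSet
      · intro i j hij x hx
        simp only [hV, Set.mem_ofPred_eq] at hx ⊢
        have : (i:ℝ) ≤ j := by exact_mod_cast hij
        linarith
      · exact ⟨0, measure_ne_top _ _⟩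
    have hemp : (⋂ n : ℕ, V n) = ∅ := by
      ext x
      simp only [Set.mem_iInter, Set.mem_empty_iff_false, iff_false, not_forall]
      obtain ⟨n, hn⟩ := exists_nat_gt (Metric.infDist x K)
      exact ⟨n, fun h => absurd h (not_lt.2 hn.le)⟩
    rw [hemp, measure_empty] at hlim
    refine le_antisymm (ge_of_tendsto' hlim fun n => ?_) (zero_le)
    obtain ⟨k, hk⟩ := exists_pow_lt_of_lt_one (show 0 < r / (n + 1) by positivity) hρ1
    refine (hiter r k).trans (measure_mono ?_)
    intro x hx
    simp only [hV, Set.mem_ofPred_eq] at hx ⊢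
    refine lt_of_le_of_lt ?_ hx
    rw [le_div_iff₀ (by positivity)]
    rw [lt_div_iff₀ (by positivity)] at hk
    have : 0 < ρ ^ k := by positivity
    nlinarith
  have hsub : Kᶜ ⊆ ⋃ n : ℕ, V (1 / (n + 1)) := by
    intro x hx
    have hpos : 0 < Metric.infDist x K :=
      (hKc.isClosed.notMem_iff_infDist_pos hKne).1 hx
    obtain ⟨n, hn⟩ := exists_nat_one_div_lt hpos
    exact Set.mem_iUnion.2 ⟨n, hn⟩
  refine measure_mono_null hsub ?_
  rw [measure_iUnion_null_iff]
  intro n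
  exact hzero _ (by positivity)

lemma integrable_of_cont {E : Type*} [NormedAddCommGroup E] {μ : Measure ℝ} [IsProbabilityMeasure μ]
    {K : Set ℝ} (hKc : IsCompact K) (hK : μ Kᶜ = 0) {g : ℝ → E} (hg : Continuous g) :
    Integrable g μ := by
  have h1 : IntegrableOn g K μ := hg.continuousOn.integrableOn_compact hKc
  rwa [IntegrableOn, Measure.restrict_eq_self_of_ae_mem] at h1
  rw [ae_iff]; exact hK

lemma selfsim_integral {E : Type*} [NormedAddCommGroup E] [NormedSpace ℝ E]
    {m : ℕ} {ρ : ℝ} {a p : Fin m → ℝ} (hp : ∀ j, 0 < p j)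
    {μ : Measure ℝ} [IsProbabilityMeasure μ]
    (hμ : μ = ∑ j : Fin m, ENNReal.ofReal (p j) • Measure.map (fun x => ρ * x + a j) μ)
    {K : Set ℝ} (hKc : IsCompact K) (hK : μ Kᶜ = 0) {g : ℝ → E} (hg : Continuous g) :
    ∫ x, g x ∂μ = ∑ j : Fin m, p j • ∫ x, g (ρ * x + a j) ∂μ := by
  conv_lhs => rw [hμ]
  have hmm : ∀ j, AEMeasurable (fun x => ρ * x + a j) μ := fun j => by fun_prop
  have hgm : ∀ j, AEStronglyMeasurable g (Measure.map (fun x => ρ * x + a j) μ) :=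
    fun j => (hg.comp_aestronglyMeasurable aestronglyMeasurable_id)
  rw [integral_finsetSum_measure]
  · apply Finset.sum_congr rfl
    intro j _
    rw [integral_smul_measure, integral_map (hmm j) (hgm j), ENNReal.toReal_ofReal (hp j).le]
  · intro j _
    apply Integrable.smul_measure _ ENNReal.ofReal_ne_top
    rw [integrable_map_measure (hgm j) (hmm j)]
    exact integrable_of_cont hKc hK (by fun_prop)

lemma reduction {m : ℕ} {ρ : ℝ} {a p : Fin m → ℝ} (hp : ∀ j, 0 < p j)
    {μ : Measure ℝ} [IsProbabilityMeasure μ]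
    (hμ : μ = ∑ j : Fin m, ENNReal.ofReal (p j) • Measure.map (fun x => ρ * x + a j) μ)
    {K : Set ℝ} (hKc : IsCompact K) (hK : μ Kᶜ = 0)
    (hmaps : ∀ j, ∀ x ∈ K, ρ * x + a j ∈ K) (n : ℕ) :
    ∀ (F : ℝ → ℂ) (H : ℝ → ℝ), Continuous F → Continuous H →
      (∀ t : ℝ, (∀ x ∈ K, ρ ^ n * x + t ∈ K) →
        ‖∫ x, F (ρ ^ n * x + t) ∂μ‖ ≤ ∫ x, H (ρ ^ n * x + t) ∂μ) →
      ‖∫ x, F x ∂μ‖ ≤ ∫ x, H x ∂μ := by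
  induction n with
  | zero =>
    intro F H _ _ h
    simpa using h 0 (by simp)
  | succ n ih =>
    intro F H hF hH h
    rw [selfsim_integral hp hμ hKc hK hF, selfsim_integral hp hμ hKc hK hH]
    refine (norm_sum_le _ _).trans (Finset.sum_le_sum fun j _ => ?_)
    rw [norm_smul, Real.norm_of_nonneg (hp j).le, smul_eq_mul]
    refine mul_le_mul_of_nonneg_left ?_ (hp j).le
    apply ih (fun x => F (ρ * x + a j)) (fun x => H (ρ * x + a j)) (by fun_prop) (by fun_prop)
    intro t ht
    have := h (ρ * t + a j) (by
      intro x hx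
      have := hmaps j _ (ht x hx)
      convert this using 1; ring)
    have e : ∀ x, ρ ^ (n+1) * x + (ρ * t + a j) = ρ * (ρ ^ n * x + t) + a j := by intro x; ring
    simpa only [e] using this

lemma frostman {m : ℕ} (hm : 2 ≤ m) {ρ : ℝ} (hρ0 : 0 < ρ) (hρ1 : ρ < 1)
    {a p : Fin m → ℝ} (hp : ∀ j, 0 < p j) (hp1 : ∑ j, p j = 1)
    {μ : Measure ℝ} [IsProbabilityMeasure μ]
    (hμ : μ = ∑ j : Fin m, ENNReal.ofReal (p j) • Measure.map (fun x => ρ * x + a j) μ)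
    {K : Set ℝ} (hKc : IsCompact K) (hK : μ Kᶜ = 0)
    (hsep : ∀ j j' : Fin m, j ≠ j' →
      Disjoint ((fun x => ρ * x + a j) '' K) ((fun x => ρ * x + a j') '' K)) :
    ∃ δ > 0, ∃ q : ℝ, 0 < q ∧ q < 1 ∧ ∀ n : ℕ, ∀ c l : ℝ, l ≤ δ * ρ ^ n →
      μ (Set.Icc c (c + l)) ≤ ENNReal.ofReal (q ^ n) := by
  have hcpt : ∀ j : Fin m, IsCompact ((fun x => ρ * x + a j) '' K) := fun j =>
    hKc.image (by fun_prop)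
  -- separation constant
  obtain ⟨δ, hδ0, hδ⟩ : ∃ δ > 0, ∀ j j' : Fin m, j ≠ j' → ∀ x ∈ (fun x => ρ * x + a j) '' K,
      ∀ y ∈ (fun x => ρ * x + a j') '' K, δ < |x - y| := by
    have h1 : ∀ z : Fin m × Fin m, ∃ δ > 0, z.1 ≠ z.2 → ∀ x ∈ (fun x => ρ * x + a z.1) '' K,
      ∀ y ∈ (fun x => ρ * x + a z.2) '' K, δ < |x - y| := by
      rintro ⟨j, j'⟩
      by_cases hj : j = j'
      · exact ⟨1, one_pos, fun h => absurd hj h⟩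
      · obtain ⟨r, hr, h⟩ := Metric.exists_pos_forall_lt_edist (hcpt j) (hcpt j').isClosed
          (hsep j j' hj)
        refine ⟨r, hr, fun _ x hx y hy => ?_⟩
        have := h x hx y hy
        rw [edist_dist, Real.dist_eq] at this
        have h2 := (ENNReal.lt_ofReal_iff_toReal_lt (by simp)).1 this
        simpa using h2
    choose f hf0 hf using h1
    have hne : (Finset.univ : Finset (Fin m × Fin m)).Nonempty :=
      ⟨(⟨0, by omega⟩, ⟨0, by omega⟩), Finset.mem_univ _⟩
    refine ⟨Finset.univ.inf' hne f, ?_, ?_⟩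
    · rw [gt_iff_lt, Finset.lt_inf'_iff]; exact fun z _ => hf0 z
    · intro j j' hj x hx y hy
      exact lt_of_le_of_lt (Finset.inf'_le _ (Finset.mem_univ (j, j'))) (hf (j, j') hj x hx y hy)
  have hplt : ∀ j, p j < 1 := by
    intro j
    obtain ⟨j', hj'⟩ : ∃ j' : Fin m, j' ≠ j := by
      have : Nontrivial (Fin m) := Fin.nontrivial_iff_two_le.2 hm
      exact exists_ne j
    have : p j + p j' ≤ ∑ i, p i := by
      rw [← Finset.sum_pair hj'.symm]
      exact Finset.sum_le_sum_of_subset_of_nonneg (Finset.subset_univ _) fun i _ _ => (hp i).le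
    linarith [hp j']
  have hne : (Finset.univ : Finset (Fin m)).Nonempty := ⟨⟨0, by omega⟩, Finset.mem_univ _⟩
  set q := Finset.univ.sup' hne p with hq
  have hpq : ∀ j, p j ≤ q := fun j => Finset.le_sup' _ (Finset.mem_univ j)
  have hq0 : 0 < q := lt_of_lt_of_le (hp ⟨0, by omega⟩) (hpq _)
  have hq1 : q < 1 := by
    rw [hq, Finset.sup'_lt_iff]; exact fun j _ => hplt j
  refine ⟨δ, hδ0, q, hq0, hq1, ?_⟩
  intro n
  induction n with
  | zero =>
    intro c l _
    simpa using prob_le_one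
  | succ n ih =>
    intro c l hl
    have hlδ : l ≤ δ := hl.trans (by
      have : ρ ^ (n+1) ≤ 1 := pow_le_one₀ hρ0.le hρ1.le
      nlinarith)
    have hpre : ∀ j, (fun x => ρ * x + a j) ⁻¹' (Set.Icc c (c + l)) =
        Set.Icc ((c - a j) / ρ) ((c - a j) / ρ + l / ρ) := by
      intro j
      ext x
      simp only [Set.mem_preimage, Set.mem_Icc]
      rw [← add_div, div_le_iff₀ hρ0, le_div_iff₀ hρ0]
      constructor <;> rintro ⟨h1, h2⟩ <;> constructor <;> linarith
    have hterm : ∀ j, μ ((fun x => ρ * x + a j) ⁻¹' (Set.Icc c (c + l)))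
        ≤ ENNReal.ofReal (q ^ n) := by
      intro j
      rw [hpre]
      apply ih
      rw [div_le_iff₀ hρ0, mul_assoc, ← pow_succ]
      exact hl
    have hzero : ∀ j, (∀ x ∈ K, ρ * x + a j ∉ Set.Icc c (c + l)) →
        μ ((fun x => ρ * x + a j) ⁻¹' (Set.Icc c (c + l))) = 0 := by
      intro j hj
      exact measure_mono_null (fun x hx hxK => hj x hxK hx) hK
    rw [selfsim_apply hμ measurableSet_Icc]
    by_cases hex : ∃ j, ∃ x ∈ K, ρ * x + a j ∈ Set.Icc c (c + l)
    · obtain ⟨j, x, hx, hxI⟩ := hex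
      rw [Finset.sum_eq_single j]
      · rw [pow_succ', ENNReal.ofReal_mul hq0.le]
        exact mul_le_mul' (ENNReal.ofReal_le_ofReal (hpq j)) (hterm j)
      · intro j' _ hj'
        rw [hzero j', mul_zero]
        intro y hy hyI
        have := hδ j' j hj' _ ⟨y, hy, rfl⟩ _ ⟨x, hx, rfl⟩
        have h2 : |(ρ * y + a j') - (ρ * x + a j)| ≤ l := by
          rw [abs_le]; constructor <;> linarith [hxI.1, hxI.2, hyI.1, hyI.2]
        simp only at this
        linarith
      · intro h; exact absurd (Finset.mem_univ j) h
    · push Not at hex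
      rw [Finset.sum_eq_zero]
      · exact zero_le
      · intro j _
        rw [hzero j (hex j), mul_zero]

/-- Norm of the mask polynomial away from integers. -/
lemma two_term_bound (p q : ℝ) (hp : 0 < p) (hq : 0 < q) (κ : ℝ) (hκ : 0 < κ) :
    ∃ c > 0, ∀ t : ℝ, (∀ n : ℤ, κ ≤ |t - n|) → ‖(p : ℂ) + q * ee t‖ ≤ p + q - c := by
  by_cases hne : (Set.Icc κ (1 - κ)).Nonempty
  · obtain ⟨t0, ht0, hmax⟩ := isCompact_Icc.exists_isMaxOn (f := fun t => ‖(p : ℂ) + q * ee t‖) hne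
      (by have := ee_cont; fun_prop)
    have hlt : ‖(p : ℂ) + q * ee t0‖ < p + q := by
      have hsq : ‖(p : ℂ) + q * ee t0‖ ^ 2 = (p + q) ^ 2 - 2 * p * q * (1 - Real.cos (2 * π * t0)) := by
        have : (p : ℂ) + q * ee t0 =
            ⟨p + q * Real.cos (2 * π * t0), q * Real.sin (2 * π * t0)⟩ := by
          apply Complex.ext
          · simp [ee, Complex.exp_ofReal_mul_I_re, -Complex.ofReal_mul]
          · simp [ee, Complex.exp_ofReal_mul_I_im, -Complex.ofReal_mul]
        rw [this, ← Complex.normSq_eq_norm_sq, Complex.normSq_mk]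
        linear_combination q ^ 2 * Real.sin_sq_add_cos_sq (2 * π * t0)
      have hcos : Real.cos (2 * π * t0) < 1 := by
        refine lt_of_le_of_ne (Real.cos_le_one _) fun h => ?_
        obtain ⟨n, hn⟩ := (Real.cos_eq_one_iff _).1 h
        have hn' : (n : ℝ) = t0 := by
          have : (2 * π) ≠ 0 := by positivity
          apply mul_left_cancel₀ this; linarith
        have h1 : (0:ℝ) < n := by rw [hn']; linarith [ht0.1]
        have h2 : (n:ℝ) < 1 := by rw [hn']; linarith [ht0.2]
        have h1' : 0 < n := by exact_mod_cast h1
        have h2' : n < 1 := by exact_mod_cast h2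
        omega
      have hpq : 0 < p * q := by positivity
      apply lt_of_pow_lt_pow_left₀ 2 (by positivity)
      rw [hsq]
      nlinarith
    refine ⟨p + q - ‖(p : ℂ) + q * ee t0‖, by linarith, fun t ht => ?_⟩
    have hfr : Int.fract t ∈ Set.Icc κ (1 - κ) := by
      have h0 := ht ⌊t⌋
      have h1 := ht (⌊t⌋ + 1)
      have e0 : t - ⌊t⌋ = Int.fract t := rfl
      rw [e0, abs_of_nonneg (Int.fract_nonneg t)] at h0
      push_cast at h1
      have e1 : t - (⌊t⌋ + 1) = Int.fract t - 1 := by rw [← e0]; ring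
      rw [e1, abs_of_nonpos (by linarith [Int.fract_lt_one t])] at h1
      exact ⟨h0, by linarith⟩
    have hee : ee t = ee (Int.fract t) := by
      conv_lhs => rw [← Int.fract_add_floor t, ee_add, ee_int, mul_one]
    have := hmax hfr
    simp only [Set.mem_ofPred_eq] at this
    rw [hee]; linarith
  · refine ⟨1, one_pos, fun t ht => ?_⟩
    exfalso
    apply hne
    refine ⟨Int.fract t, ?_⟩
    have h0 := ht ⌊t⌋
    have h1 := ht (⌊t⌋ + 1)
    have e0 : t - ⌊t⌋ = Int.fract t := rfl
    rw [e0, abs_of_nonneg (Int.fract_nonneg t)] at h0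
    push_cast at h1
    have e1 : t - (⌊t⌋ + 1) = Int.fract t - 1 := by rw [← e0]; ring
    rw [e1, abs_of_nonpos (by linarith [Int.fract_lt_one t])] at h1
    exact ⟨h0, by linarith⟩

/-- The mask polynomial. -/
noncomputable def maskP {m : ℕ} (a p : Fin m → ℝ) (t : ℝ) : ℂ := ∑ j, (p j : ℂ) * ee (a j * t)

lemma maskP_cont {m : ℕ} (a p : Fin m → ℝ) : Continuous (maskP a p) := by
  unfold maskP
  have := ee_cont
  fun_prop

lemma maskP_le_one {m : ℕ} {a p : Fin m → ℝ} (hp : ∀ j, 0 < p j) (hp1 : ∑ j, p j = 1) (t : ℝ) :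
    ‖maskP a p t‖ ≤ 1 := by
  unfold maskP
  refine (norm_sum_le _ _).trans ?_
  rw [← hp1]
  apply Finset.sum_le_sum
  intro j _
  rw [norm_mul, ee_norm, mul_one, Complex.norm_real, Real.norm_of_nonneg (hp j).le]

lemma maskP_bound {m : ℕ} {a p : Fin m → ℝ} (hp : ∀ j, 0 < p j) (hp1 : ∑ j, p j = 1)
    {i j : Fin m} (hij : i ≠ j) (κ : ℝ) (hκ : 0 < κ) :
    ∃ r : ℝ, 0 < r ∧ r < 1 ∧ ∀ t : ℝ, (∀ n : ℤ, κ ≤ |(a j - a i) * t - n|) → ‖maskP a p t‖ ≤ r := by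
  obtain ⟨c, hc, h⟩ := two_term_bound (p i) (p j) (hp i) (hp j) κ hκ
  refine ⟨max (1 - c) (1 / 2), lt_max_of_lt_right (by norm_num),
    max_lt (by linarith) (by norm_num), fun t ht => le_max_of_le_left ?_⟩
  have h1 := h _ ht
  unfold maskP
  rw [← Finset.sum_add_sum_compl {i, j}, Finset.sum_pair hij]
  have h2 : (p i : ℂ) * ee (a i * t) + p j * ee (a j * t)
      = ee (a i * t) * (p i + p j * ee ((a j - a i) * t)) := by
    rw [mul_add, mul_left_comm _ (p j : ℂ), ← ee_add]
    ring_nf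
  have h3 : ‖∑ k ∈ ({i, j} : Finset (Fin m))ᶜ, (p k : ℂ) * ee (a k * t)‖
      ≤ ∑ k ∈ ({i, j} : Finset (Fin m))ᶜ, p k := by
    refine (norm_sum_le _ _).trans (Finset.sum_le_sum fun k _ => ?_)
    rw [norm_mul, ee_norm, mul_one, Complex.norm_real, Real.norm_of_nonneg (hp k).le]
  have h4 : p i + p j + ∑ k ∈ ({i, j} : Finset (Fin m))ᶜ, p k = 1 := by
    rw [← hp1, ← Finset.sum_add_sum_compl {i, j}, Finset.sum_pair hij]
  refine (norm_add_le _ _).trans ?_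
  rw [h2, norm_mul, ee_norm, one_mul]
  linarith

/-- Fourier transform. -/
noncomputable def ft (μ : Measure ℝ) (u : ℝ) : ℂ := ∫ x, ee (u * x) ∂μ

lemma ft_le_one (μ : Measure ℝ) [IsProbabilityMeasure μ] (u : ℝ) : ‖ft μ u‖ ≤ 1 := by
  unfold ft
  refine (norm_integral_le_integral_norm _).trans ?_
  simp [ee_norm]

lemma ft_cont (μ : Measure ℝ) [IsProbabilityMeasure μ] : Continuous (ft μ) := by
  unfold ft
  have := ee_cont
  apply continuous_of_dominated (bound := fun _ => 1)
  · intro u; exact (by fun_prop : Continuous fun x => ee (u * x)).aestronglyMeasurable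
  · intro u; exact Eventually.of_forall fun x => (ee_norm _).le
  · exact integrable_const _
  · exact Eventually.of_forall fun x => by fun_prop

lemma ft_step {m : ℕ} {ρ : ℝ} {a p : Fin m → ℝ} (hp : ∀ j, 0 < p j)
    {μ : Measure ℝ} [IsProbabilityMeasure μ]
    (hμ : μ = ∑ j : Fin m, ENNReal.ofReal (p j) • Measure.map (fun x => ρ * x + a j) μ)
    {K : Set ℝ} (hKc : IsCompact K) (hK : μ Kᶜ = 0) (u : ℝ) :
    ft μ u = maskP a p u * ft μ (ρ * u) := by
  unfold ft maskP
  have := ee_cont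
  rw [selfsim_integral hp hμ hKc hK (g := fun x => ee (u * x)) (by fun_prop), Finset.sum_mul]
  apply Finset.sum_congr rfl
  intro j _
  have : ∀ x, ee (u * (ρ * x + a j)) = ee (a j * u) * ee (ρ * u * x) := by
    intro x; rw [← ee_add]; ring_nf
  simp_rw [this]
  rw [integral_const_mul, Complex.real_smul, mul_assoc]

lemma ft_prod {m : ℕ} {ρ : ℝ} {a p : Fin m → ℝ} (hp : ∀ j, 0 < p j)
    {μ : Measure ℝ} [IsProbabilityMeasure μ]
    (hμ : μ = ∑ j : Fin m, ENNReal.ofReal (p j) • Measure.map (fun x => ρ * x + a j) μ)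
    {K : Set ℝ} (hKc : IsCompact K) (hK : μ Kᶜ = 0) (N : ℕ) (u : ℝ) :
    ‖ft μ u‖ ≤ ∏ k ∈ Finset.range N, ‖maskP a p (ρ ^ k * u)‖ := by
  have : ‖ft μ u‖ = (∏ k ∈ Finset.range N, ‖maskP a p (ρ ^ k * u)‖) * ‖ft μ (ρ ^ N * u)‖ := by
    induction N with
    | zero => simp
    | succ N ih =>
      rw [ih, ft_step hp hμ hKc hK (ρ ^ N * u), Finset.prod_range_succ, norm_mul, pow_succ']
      ring_nf
  rw [this]
  exact mul_le_of_le_one_right (Finset.prod_nonneg fun _ _ => norm_nonneg _) (ft_le_one _ _)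


lemma frostman' {μ : Measure ℝ} [IsProbabilityMeasure μ] {ρ δ q : ℝ} (hρ0 : 0 < ρ) (hρ1 : ρ < 1)
    (hδ : 0 < δ) (hq0 : 0 < q) (hq1 : q < 1)
    (h : ∀ n : ℕ, ∀ c l : ℝ, l ≤ δ * ρ ^ n → μ (Set.Icc c (c + l)) ≤ ENNReal.ofReal (q ^ n))
    (A : ℝ) : ∃ C > 0, ∀ n : ℕ, ∀ c l : ℝ, l ≤ A * ρ ^ n →
      μ (Set.Icc c (c + l)) ≤ ENNReal.ofReal (C * q ^ n) := by
  obtain ⟨k, hk⟩ := exists_pow_lt_of_lt_one (show 0 < δ / (|A| + 1) by positivity) hρ1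
  rw [lt_div_iff₀ (by positivity)] at hk
  have hA : A * ρ ^ k ≤ δ := by
    have : 0 < ρ ^ k := by positivity
    nlinarith [le_abs_self A]
  refine ⟨(q ^ k)⁻¹, by positivity, fun n c l hl => ?_⟩
  by_cases hn : k ≤ n
  · obtain ⟨i, rfl⟩ := Nat.exists_eq_add_of_le hn
    have : (q ^ k)⁻¹ * q ^ (k + i) = q ^ i := by
      rw [pow_add]; field_simp
    rw [this]
    apply h
    refine hl.trans ?_
    rw [pow_add, ← mul_assoc]
    gcongr
  · refine prob_le_one.trans ?_
    rw [← ENNReal.ofReal_one]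
    apply ENNReal.ofReal_le_ofReal
    rw [inv_mul_eq_div, le_div_iff₀ (by positivity), one_mul]
    exact pow_le_pow_of_le_one hq0.le hq1.le (by omega)

lemma moment_bound {m : ℕ} (hm : 2 ≤ m) {ρ : ℝ} (hρ0 : 0 < ρ) (hρ1 : ρ < 1)
    {a p : Fin m → ℝ} (hp : ∀ j, 0 < p j) (hp1 : ∑ j, p j = 1)
    {μ : Measure ℝ} [IsProbabilityMeasure μ]
    (hμ : μ = ∑ j : Fin m, ENNReal.ofReal (p j) • Measure.map (fun x => ρ * x + a j) μ)
    {K : Set ℝ} (hKc : IsCompact K) (hKne : K.Nonempty) (hK : μ Kᶜ = 0)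
    (hsep : ∀ j j' : Fin m, j ≠ j' →
      Disjoint ((fun x => ρ * x + a j) '' K) ((fun x => ρ * x + a j') '' K))
    (ψ : ℝ → ℝ) (hψ : Continuous ψ) (R : ℝ) (hR : ∀ x ∈ K, |ψ x| ≤ R)
    (c0 : ℝ) (hc0 : 0 < c0) (hexp : ∀ x ∈ K, ∀ y ∈ K, c0 * |x - y| ≤ |ψ x - ψ y|) :
    ∃ M : ℕ, ∃ C > 0, ∃ q' : ℝ, 0 < q' ∧ q' < 1 ∧ ∀ N : ℕ, ∀ ξ : ℝ,
      1 ≤ ξ * ρ ^ (3 * N) → ξ * ρ ^ (3 * N) ≤ (ρ⁻¹) ^ 3 →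
      ∫ x, ‖ft μ (ξ * ρ ^ (2 * N) * ψ x)‖ ^ (M + 1) ∂μ ≤ C * q' ^ N := by
  -- two distinct translations
  obtain ⟨i, j, hij⟩ : ∃ i j : Fin m, a i < a j := by
    have h01 : (⟨0, by omega⟩ : Fin m) ≠ ⟨1, by omega⟩ := by simp
    have hne : a ⟨0, by omega⟩ ≠ a ⟨1, by omega⟩ := by
      intro h
      have := hsep _ _ h01
      rw [h] at this
      obtain ⟨x, hx⟩ := hKne
      exact Set.disjoint_left.1 this ⟨x, hx, rfl⟩ ⟨x, hx, rfl⟩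
    rcases lt_or_gt_of_ne hne with h | h
    · exact ⟨_, _, h⟩
    · exact ⟨_, _, h⟩
  have hijne : i ≠ j := fun h => by rw [h] at hij; exact lt_irrefl _ hij
  set d := a j - a i with hd
  have hd0 : 0 < d := by rw [hd]; linarith
  set β := ρ⁻¹ with hβdef
  have hβ0 : 0 < β := by positivity
  have hβ1 : 1 < β := (one_lt_inv₀ hρ0).2 hρ1
  have hβρ : β * ρ = 1 := inv_mul_cancel₀ hρ0.ne'
  obtain ⟨r, hr0, hr1, hr⟩ := maskP_bound hp hp1 (a := a) hijne (1 / (8 * β)) (by positivity)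
  obtain ⟨δ, hδ0, q, hq0, hq1, hfro⟩ := frostman hm hρ0 hρ1 hp hp1 hμ hKc hK hsep
  set B : ℕ := ⌈β⌉₊ with hB
  have hBβ : β ≤ B := Nat.le_ceil _
  have hB0 : (0:ℝ) < B := by linarith
  obtain ⟨M, hM⟩ := exists_pow_lt_of_lt_one (show 0 < (1 - q) / (B * q) by
    apply div_pos <;> [linarith; positivity]) hr1
  have hM' : r ^ (M + 1) < (1 - q) / (B * q) := lt_of_le_of_lt
    (pow_le_pow_of_le_one hr0.le hr1.le (Nat.le_succ M)) hM
  rw [lt_div_iff₀ (by positivity)] at hM'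
  set η := r ^ (M + 1) with hη
  have hη0 : 0 < η := by positivity
  set q' := (1 + η * B) * q with hq'
  have hq'0 : 0 < q' := by positivity
  have hq'1 : q' < 1 := by rw [hq']; nlinarith
  obtain ⟨C, hC0, hC⟩ := frostman' hρ0 hρ1 hδ0 hq0 hq1 hfro (1 / (d * β * c0))
  obtain ⟨x00, hx00⟩ := hKne
  have hR0 : 0 ≤ R := (abs_nonneg _).trans (hR _ hx00)
  set Q : ℕ := ⌈4 * R * (d * β ^ 4)⌉₊ + 1 with hQ
  have hQR : 4 * R * (d * β ^ 4) ≤ Q := by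
    rw [hQ]; push_cast
    linarith [Nat.le_ceil (4 * R * (d * β ^ 4))]
  have hQ0 : (0:ℝ) < Q := by rw [hQ]; positivity
  refine ⟨M, Q * C, by positivity, q', hq'0, hq'1, fun N ξ hξ1 hξ2 => ?_⟩
  set θ := d * (ξ * ρ ^ (3 * N)) * β with hθ
  have hθ0 : 0 < θ := by rw [hθ]; have : 0 < ξ * ρ ^ (3 * N) := by linarith
                         positivity
  have hθ1 : d * β ≤ θ := by
    rw [hθ]; nlinarith [mul_pos hd0 hβ0]
  have hθ2 : θ ≤ d * β ^ 4 := by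
    rw [hθ, show d * β ^ 4 = d * β ^ 3 * β by ring]; gcongr
  set lam := μ.map ψ with hlam
  set h : ℝ → ℝ≥0∞ := fun t => ENNReal.ofReal (‖maskP a p (t / d)‖ ^ (M + 1)) with hh
  have hmc := maskP_cont a p
  have hhm : Measurable h := by
    apply ENNReal.measurable_ofReal.comp
    exact (by fun_prop : Continuous fun t => ‖maskP a p (t / d)‖ ^ (M + 1)).measurable
  have hκ1 : 1 / (8 * β) < 1 / 4 := by
    apply one_div_lt_one_div_of_lt <;> linarith
  have key := key_lemma lam h hhm
    (fun t => by
      rw [hh, ← ENNReal.ofReal_one]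
      exact ENNReal.ofReal_le_ofReal (pow_le_one₀ (norm_nonneg _) (maskP_le_one hp hp1 _)))
    (ENNReal.ofReal η) (1 / (8 * β)) (by positivity) hκ1
    (fun t ht => by
      apply ENNReal.ofReal_le_ofReal
      apply pow_le_pow_left₀ (norm_nonneg _)
      apply hr
      intro n
      rw [← hd, mul_div_cancel₀ _ hd0.ne']
      exact ht n)
    β hβ1 (by field_simp; norm_num) B hBβ (ENNReal.ofReal (C * q ^ N)) N θ hθ0
    (by
      intro c l hl hlθ
      rw [hlam, Measure.map_apply hψ.measurable measurableSet_Icc]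
      by_cases hex : ∃ x0 ∈ K, ψ x0 ∈ Set.Icc c (c + l)
      · obtain ⟨x0, hx0, hx0I⟩ := hex
        have hsub : ψ ⁻¹' (Set.Icc c (c + l)) ⊆
            Set.Icc (x0 - l / c0) (x0 - l / c0 + 2 * l / c0) ∪ Kᶜ := by
          intro x hx
          by_cases hxK : x ∈ K
          · left
            have h1 := hexp x hxK x0 hx0
            have h2 : |ψ x - ψ x0| ≤ l := by
              have hx' : ψ x ∈ Set.Icc c (c + l) := hx
              rw [abs_le]; constructor <;> linarith [hx'.1, hx'.2, hx0I.1, hx0I.2]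
            have h3 : |x - x0| ≤ l / c0 := by
              rw [le_div_iff₀ hc0]; linarith
            rw [abs_le] at h3
            have : 2 * l / c0 = l / c0 + l / c0 := by ring
            constructor <;> linarith [h3.1, h3.2]
          · right; exact hxK
        refine (measure_mono hsub).trans ((measure_union_le _ _).trans ?_)
        rw [hK, add_zero]
        apply hC
        have hρN : β ^ N * ρ ^ N = 1 := by rw [← mul_pow, hβρ, one_pow]
        have hρN0 : 0 < ρ ^ N := by positivity
        have h5 : l * (d * β) ≤ ρ ^ N / 2 := by
          calc l * (d * β) ≤ l * θ := by gcongr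
            _ = (l * θ * β ^ N) * ρ ^ N := by rw [mul_assoc (l * θ), hρN, mul_one]
            _ ≤ 1 / 2 * ρ ^ N := by gcongr
            _ = _ := by ring
        rw [div_mul_eq_mul_div, one_mul, div_le_div_iff₀ hc0 (by positivity)]
        nlinarith
      · push Not at hex
        have hz : μ (ψ ⁻¹' Set.Icc c (c + l)) = 0 :=
          measure_mono_null (fun x hx hxK => hex x hxK hx) hK
        rw [hz]
        exact zero_le)
  have htot : ∫⁻ y in Set.Icc (-R) (-R + 2 * R), ∏ j ∈ Finset.range N, h (β ^ j * θ * y) ∂lam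
      ≤ Q * ((1 + ENNReal.ofReal η * B) ^ N * ENNReal.ofReal (C * q ^ N)) := by
    apply lint_cover lam _ _ _ Q (by omega) (by linarith)
    intro c'
    apply key _ _ (by positivity)
    rw [div_mul_eq_mul_div, div_le_iff₀ hQ0]
    calc 2 * R * θ ≤ 2 * R * (d * β ^ 4) := by gcongr
      _ ≤ _ := by linarith
  have hval : (Q : ℝ≥0∞) * ((1 + ENNReal.ofReal η * B) ^ N * ENNReal.ofReal (C * q ^ N))
      = ENNReal.ofReal (Q * C * q' ^ N) := by
    rw [hq', mul_pow, show (Q:ℝ) * C * ((1 + η * B) ^ N * q ^ N)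
      = Q * ((1 + η * B) ^ N * (C * q ^ N)) by ring]
    have e1 : ENNReal.ofReal ((1 + η * B) ^ N) = (1 + ENNReal.ofReal η * B) ^ N := by
      rw [ENNReal.ofReal_pow (by positivity), ENNReal.ofReal_add (by positivity) (by positivity),
        ENNReal.ofReal_mul hη0.le, ENNReal.ofReal_one, ENNReal.ofReal_natCast]
    rw [ENNReal.ofReal_mul hQ0.le, ENNReal.ofReal_mul (p := (1 + η * B) ^ N) (by positivity), e1,
      ENNReal.ofReal_natCast]
  rw [hval] at htot
  have hprodm : Measurable fun y => ∏ j ∈ Finset.range N, h (β ^ j * θ * y) := by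
    apply Finset.measurable_fun_prod
    intro i _
    exact hhm.comp (by fun_prop)
  have hlamsupp : lam.restrict (Set.Icc (-R) (-R + 2 * R)) = lam := by
    apply Measure.restrict_eq_self_of_ae_mem
    rw [hlam]
    refine (ae_map_iff hψ.measurable.aemeasurable (p := fun y => y ∈ Set.Icc (-R) (-R + 2 * R))
      measurableSet_Icc).2 ?_
    have : ∀ᵐ x ∂μ, x ∈ K := by rw [ae_iff]; exact hK
    filter_upwards [this] with x hx
    have := abs_le.1 (hR x hx)
    constructor <;> linarith [this.1, this.2]
  rw [hlamsupp, hlam, lintegral_map hprodm hψ.measurable] at htot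
  have hftc := ft_cont μ
  have hcont : Continuous fun x => ‖ft μ (ξ * ρ ^ (2 * N) * ψ x)‖ ^ (M + 1) := by fun_prop
  rw [← ENNReal.ofReal_le_ofReal_iff (by positivity),
    ofReal_integral_eq_lintegral_ofReal (integrable_of_cont hKc hK hcont)
      (Eventually.of_forall fun x => by positivity)]
  refine (lintegral_mono fun x => ?_).trans htot
  have h1 := ft_prod hp hμ hKc hK N (ξ * ρ ^ (2 * N) * ψ x)
  have h2 : ∏ j ∈ Finset.range N, h (β ^ j * θ * ψ x) = ENNReal.ofReal
      ((∏ k ∈ Finset.range N, ‖maskP a p (ρ ^ k * (ξ * ρ ^ (2 * N) * ψ x))‖) ^ (M + 1)) := by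
    rw [← Finset.prod_range_reflect, ← Finset.prod_pow, ENNReal.ofReal_prod_of_nonneg
      (fun _ _ => by positivity)]
    apply Finset.prod_congr rfl
    intro k hk
    simp only [hh]
    congr 4
    have hkN : k < N := Finset.mem_range.1 hk
    obtain ⟨s, rfl⟩ : ∃ s, N = s + 1 + k := ⟨N - 1 - k, by omega⟩
    have e1 : s + 1 + k - 1 - k = s := by omega
    rw [e1, hθ]
    have e2 : β ^ (s + 1) * ρ ^ (s + 1) = 1 := by rw [← mul_pow, hβρ, one_pow]
    rw [div_eq_iff hd0.ne']
    have e3 : ρ ^ (3 * (s + 1 + k)) = ρ ^ (2 * (s + 1 + k)) * ρ ^ k * ρ ^ (s + 1) := by ring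
    rw [e3]
    linear_combination (d * ξ * ρ ^ (2 * (s + 1 + k)) * ρ ^ k * ψ x) * e2
  rw [h2]
  apply ENNReal.ofReal_le_ofReal
  exact pow_le_pow_left₀ (norm_nonneg _) h1 _

lemma first_moment {μ : Measure ℝ} [IsProbabilityMeasure μ] {M : ℕ} {C q' : ℝ} (hC : 0 < C)
    (hq0 : 0 < q') (hq1 : q' < 1) : ∃ γ : ℝ, 0 < γ ∧ γ < 1 ∧ ∀ N : ℕ, ∀ f : ℝ → ℝ,
      (∀ x, 0 ≤ f x) → Integrable f μ → Integrable (fun x => f x ^ (M + 1)) μ →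
      ∫ x, f x ^ (M + 1) ∂μ ≤ C * q' ^ N → ∫ x, f x ∂μ ≤ (1 + C) * γ ^ N := by
  set γ := q' ^ ((1 : ℝ) / (M + 1 : ℕ)) with hγ
  have hγM : γ ^ (M + 1) = q' := by
    rw [hγ, ← Real.rpow_natCast, ← Real.rpow_mul hq0.le, one_div, inv_mul_cancel₀ (by positivity),
      Real.rpow_one]
  have hγ0 : 0 < γ := by positivity
  refine ⟨γ, hγ0, Real.rpow_lt_one hq0.le hq1 (by positivity), ?_⟩
  intro N f hf0 hf1 hf2 hf
  set ε := γ ^ N with hε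
  have hε0 : 0 < ε := by positivity
  have hpt : ∀ x, f x ≤ ε + (ε ^ M)⁻¹ * f x ^ (M + 1) := by
    intro x
    have hnn : 0 ≤ (ε ^ M)⁻¹ * f x ^ (M + 1) := mul_nonneg (by positivity) (pow_nonneg (hf0 x) _)
    rcases le_total (f x) ε with h | h
    · linarith
    · have : ε ^ M ≤ f x ^ M := pow_le_pow_left₀ hε0.le h M
      have h2 : f x ≤ (ε ^ M)⁻¹ * f x ^ (M + 1) := by
        rw [inv_mul_eq_div, le_div_iff₀ (by positivity), pow_succ']
        exact mul_le_mul_of_nonneg_left this (hf0 x)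
      linarith
  calc ∫ x, f x ∂μ ≤ ∫ x, (ε + (ε ^ M)⁻¹ * f x ^ (M + 1)) ∂μ :=
        integral_mono hf1 ((integrable_const _).add (hf2.const_mul _)) hpt
    _ = ε + (ε ^ M)⁻¹ * ∫ x, f x ^ (M + 1) ∂μ := by
        rw [integral_add (integrable_const _) (hf2.const_mul _), integral_const_mul]; simp
    _ ≤ ε + (ε ^ M)⁻¹ * (C * q' ^ N) := by gcongr
    _ = _ := by
        have e : q' ^ N = ε ^ M * ε := by
          rw [← hγM, ← pow_mul, mul_comm (M + 1) N, pow_mul, ← hε, pow_succ]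
        rw [e]
        field_simp


lemma calc_bounds {φ : ℝ → ℝ} (hφ : ContDiff ℝ 2 φ) (hφ'' : ∀ t, 0 < deriv (deriv φ) t)
    {K : Set ℝ} (hKc : IsCompact K) :
    Continuous (deriv φ) ∧ (∃ R, ∀ x ∈ K, |deriv φ x| ≤ R) ∧
    (∃ c0 > 0, ∀ x ∈ K, ∀ y ∈ K, c0 * |x - y| ≤ |deriv φ x - deriv φ y|) ∧
    (∃ C > 0, ∀ x ∈ K, ∀ y ∈ K, |φ x - φ y - deriv φ y * (x - y)| ≤ C * |x - y| ^ 2) := by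
  have hφ1 : ContDiff ℝ 1 (deriv φ) := by
    have : ContDiff ℝ (1 + 1) φ := by simpa [one_add_one_eq_two] using hφ
    exact (contDiff_succ_iff_deriv.1 this).2.2
  have hd1 : Differentiable ℝ φ := hφ.differentiable (by norm_num)
  have hd2 : Differentiable ℝ (deriv φ) := hφ1.differentiable (by norm_num)
  have hc2 : Continuous (deriv (deriv φ)) := hφ1.continuous_deriv (by norm_num)
  obtain ⟨L, hL⟩ := hKc.isBounded.subset_closedBall 0
  have hKI : ∀ x ∈ K, x ∈ Set.Icc (-|L|) |L| := by
    intro x hx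
    have := hL hx
    rw [mem_closedBall_zero_iff, Real.norm_eq_abs] at this
    exact abs_le.1 (this.trans (le_abs_self L))
  have hne : (Set.Icc (-|L|) |L|).Nonempty := ⟨0, by simp⟩
  obtain ⟨t0, -, hmin⟩ := isCompact_Icc.exists_isMinOn hne hc2.continuousOn
  obtain ⟨t1, -, hmax⟩ := isCompact_Icc.exists_isMaxOn hne hc2.continuousOn
  have hmin' : ∀ t ∈ Set.Icc (-|L|) |L|, deriv (deriv φ) t0 ≤ deriv (deriv φ) t := fun t ht => hmin ht
  have hmax' : ∀ t ∈ Set.Icc (-|L|) |L|, deriv (deriv φ) t ≤ deriv (deriv φ) t1 := fun t ht => hmax ht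
  have hconv : Convex ℝ (Set.Icc (-|L|) |L|) := convex_Icc _ _
  refine ⟨hφ1.continuous, ?_, ⟨deriv (deriv φ) t0, hφ'' _, ?_⟩, ⟨deriv (deriv φ) t1, hφ'' _, ?_⟩⟩
  · obtain ⟨R, hR⟩ := hKc.exists_bound_of_continuousOn hφ1.continuous.continuousOn
    exact ⟨R, hR⟩
  · have key : ∀ x ∈ K, ∀ y ∈ K, x ≤ y →
        deriv (deriv φ) t0 * (y - x) ≤ deriv φ y - deriv φ x := by
      intro x hx y hy hxy
      exact hconv.mul_sub_le_image_sub_of_le_deriv hφ1.continuous.continuousOn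
        hd2.differentiableOn (fun t ht => hmin' t (interior_subset ht)) x (hKI x hx) y (hKI y hy) hxy
    intro x hx y hy
    rcases le_total x y with h | h
    · have := key x hx y hy h
      rw [abs_sub_comm x y, abs_sub_comm (deriv φ x), abs_of_nonneg (sub_nonneg.2 h)]
      exact this.trans (le_abs_self _)
    · have := key y hy x hx h
      rw [abs_of_nonneg (sub_nonneg.2 h)]
      exact this.trans (le_abs_self _)
  · intro x hx y hy
    have hlip : ∀ s ∈ Set.Icc (-|L|) |L|, ∀ t ∈ Set.Icc (-|L|) |L|,
        ‖deriv φ s - deriv φ t‖ ≤ deriv (deriv φ) t1 * ‖s - t‖ := by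
      intro s hs t ht
      refine hconv.norm_image_sub_le_of_norm_deriv_le (fun u _ => hd2 u) (fun u hu => ?_) ht hs
      rw [Real.norm_of_nonneg (hφ'' u).le]
      exact hmax' u hu
    have hseg : ∀ u ∈ segment ℝ y x, u ∈ Set.Icc (-|L|) |L| :=
      fun u hu => hconv.segment_subset (hKI y hy) (hKI x hx) hu
    have := (convex_segment (𝕜 := ℝ) y x).norm_image_sub_le_of_norm_hasDerivWithin_le
      (f := fun u => φ u - deriv φ y * u) (f' := fun u => deriv φ u - deriv φ y)
      (C := deriv (deriv φ) t1 * |x - y|) (x := y) (y := x)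
      (fun u _ => by
        have h1 := (hd1 u).hasDerivAt.sub ((hasDerivAt_id u).const_mul (deriv φ y))
        simp only [mul_one] at h1
        exact h1.hasDerivWithinAt)
      (fun u hu => by
        refine (hlip u (hseg u hu) y (hKI y hy)).trans ?_
        refine mul_le_mul_of_nonneg_left ?_ (hφ'' _).le
        rw [Real.norm_eq_abs]
        rw [segment_eq_uIcc] at hu
        exact Set.abs_sub_left_of_mem_uIcc hu)
      (left_mem_segment ℝ y x) (right_mem_segment ℝ y x)
    simp only [Real.norm_eq_abs] at this
    calc |φ x - φ y - deriv φ y * (x - y)|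
        = |φ x - deriv φ y * x - (φ y - deriv φ y * y)| := by congr 1; ring
      _ ≤ _ := this
      _ = _ := by ring

lemma decay_aux {m : ℕ} (hm : 2 ≤ m) {ρ : ℝ} (hρ0 : 0 < ρ) (hρ1 : ρ < 1)
    {a p : Fin m → ℝ} (hp : ∀ j, 0 < p j) (hp1 : ∑ j, p j = 1)
    {μ : Measure ℝ} [IsProbabilityMeasure μ]
    (hμ : μ = ∑ j : Fin m, ENNReal.ofReal (p j) • Measure.map (fun x => ρ * x + a j) μ)
    {K : Set ℝ} (hKc : IsCompact K) (hKne : K.Nonempty)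
    (hKattr : K = ⋃ j : Fin m, (fun x => ρ * x + a j) '' K)
    (hsep : ∀ j j' : Fin m, j ≠ j' →
      Disjoint ((fun x => ρ * x + a j) '' K) ((fun x => ρ * x + a j') '' K))
    {φ : ℝ → ℝ} (hφ : ContDiff ℝ 2 φ) (hφ'' : ∀ t, 0 < deriv (deriv φ) t) :
    ∃ C > 0, ∃ γ : ℝ, 0 < γ ∧ γ < 1 ∧ ∀ N : ℕ, ∀ ξ : ℝ,
      1 ≤ ξ * ρ ^ (3 * N) → ξ * ρ ^ (3 * N) ≤ (ρ⁻¹) ^ 3 →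
      ‖∫ x, ee (ξ * φ x) ∂μ‖ ≤ C * γ ^ N := by
  have hmaps : ∀ j, ∀ x ∈ K, ρ * x + a j ∈ K := by
    intro j x hx
    rw [hKattr]
    exact Set.mem_iUnion.2 ⟨j, x, hx, rfl⟩
  have hK : μ Kᶜ = 0 := supp_K hρ0 hρ1 hp hp1 hμ hKc hKne hmaps
  obtain ⟨hc, ⟨R, hR⟩, ⟨c0, hc0, hexp⟩, ⟨C1, hC1, htay⟩⟩ := calc_bounds hφ hφ'' hKc
  obtain ⟨M, C, hC, q', hq0, hq1, hmom⟩ := moment_bound hm hρ0 hρ1 hp hp1 hμ hKc hKne hK hsep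
    (deriv φ) hc R hR c0 hc0 hexp
  obtain ⟨γ, hγ0, hγ1, hfm⟩ := first_moment (μ := μ) (M := M) hC hq0 hq1
  obtain ⟨D, hD⟩ := hKc.isBounded.subset_closedBall 0
  have hKD : ∀ x ∈ K, |x| ≤ |D| := by
    intro x hx
    have := hD hx
    rw [mem_closedBall_zero_iff, Real.norm_eq_abs] at this
    exact this.trans (le_abs_self D)
  have hφc : Continuous φ := hφ.continuous
  have heec := ee_cont
  have hftc := ft_cont μ
  have hKae : ∀ᵐ x ∂μ, x ∈ K := by rw [ae_iff]; exact hK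
  set C2 := 2 * π * C1 * (2 * |D|) ^ 2 with hC2
  refine ⟨(1 + C) + C2 * (ρ⁻¹) ^ 3, by positivity, max γ ρ, lt_max_of_lt_left hγ0,
    max_lt hγ1 hρ1, fun N ξ hξ1 hξ2 => ?_⟩
  have hξ0 : 0 < ξ := by
    by_contra h
    have : ξ * ρ ^ (3 * N) ≤ 0 := mul_nonpos_of_nonpos_of_nonneg (not_lt.1 h) (by positivity)
    linarith
  have hmain : ‖∫ x, ee (ξ * φ x) ∂μ‖ ≤
      ∫ x, (‖ft μ (ξ * ρ ^ (2 * N) * deriv φ x)‖ + C2 * (ρ⁻¹) ^ 3 * ρ ^ N) ∂μ := by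
    apply reduction hp hμ hKc hK hmaps (2 * N) (fun x => ee (ξ * φ x))
      (fun x => ‖ft μ (ξ * ρ ^ (2 * N) * deriv φ x)‖ + C2 * (ρ⁻¹) ^ 3 * ρ ^ N)
      (by fun_prop) (by fun_prop)
    intro t ht
    -- pointwise in y
    have hpt : ∀ y ∈ K, ‖∫ x, ee (ξ * φ (ρ ^ (2 * N) * x + t)) ∂μ‖ ≤
        ‖ft μ (ξ * ρ ^ (2 * N) * deriv φ (ρ ^ (2 * N) * y + t))‖ + C2 * (ρ⁻¹) ^ 3 * ρ ^ N := by
      intro y hy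
      set g := ρ ^ (2 * N) * y + t with hg
      have hlin : ∫ x, ee (ξ * (φ g + deriv φ g * (ρ ^ (2 * N) * x + t - g))) ∂μ
          = ee (ξ * φ g + ξ * deriv φ g * (t - g)) * ft μ (ξ * ρ ^ (2 * N) * deriv φ g) := by
        unfold ft
        rw [← integral_const_mul]
        congr 1
        ext x
        rw [← ee_add]; congr 1; ring
      have hnl : ‖∫ x, ee (ξ * (φ g + deriv φ g * (ρ ^ (2 * N) * x + t - g))) ∂μ‖
          = ‖ft μ (ξ * ρ ^ (2 * N) * deriv φ g)‖ := by
        rw [hlin, norm_mul, ee_norm, one_mul]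
      have hdiff : ‖∫ x, ee (ξ * φ (ρ ^ (2 * N) * x + t)) ∂μ
          - ∫ x, ee (ξ * (φ g + deriv φ g * (ρ ^ (2 * N) * x + t - g))) ∂μ‖
          ≤ C2 * (ρ⁻¹) ^ 3 * ρ ^ N := by
        rw [← integral_sub (integrable_of_cont hKc hK (by fun_prop))
          (integrable_of_cont hKc hK (by fun_prop))]
        have : ∀ᵐ x ∂μ, ‖ee (ξ * φ (ρ ^ (2 * N) * x + t))
            - ee (ξ * (φ g + deriv φ g * (ρ ^ (2 * N) * x + t - g)))‖
            ≤ C2 * (ρ⁻¹) ^ 3 * ρ ^ N := by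
          filter_upwards [hKae] with x hx
          refine (ee_sub_le _ _).trans ?_
          have h1 := htay _ (ht x hx) g (ht y hy)
          have h2 : |ξ * φ (ρ ^ (2 * N) * x + t)
              - ξ * (φ g + deriv φ g * (ρ ^ (2 * N) * x + t - g))|
              = ξ * |φ (ρ ^ (2 * N) * x + t) - φ g - deriv φ g * (ρ ^ (2 * N) * x + t - g)| := by
            rw [← abs_of_pos hξ0, ← abs_mul, abs_of_pos hξ0]; congr 1; ring
          rw [h2]
          have h3 : |ρ ^ (2 * N) * x + t - g| ≤ ρ ^ (2 * N) * (2 * |D|) := by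
            rw [hg, show ρ ^ (2 * N) * x + t - (ρ ^ (2 * N) * y + t) = ρ ^ (2 * N) * (x - y) by ring,
              abs_mul, abs_of_pos (by positivity : 0 < ρ ^ (2 * N))]
            gcongr
            have := abs_sub x y
            linarith [hKD x hx, hKD y hy]
          calc 2 * π * (ξ * |φ (ρ ^ (2 * N) * x + t) - φ g - deriv φ g * (ρ ^ (2 * N) * x + t - g)|)
              ≤ 2 * π * (ξ * (C1 * (ρ ^ (2 * N) * (2 * |D|)) ^ 2)) := by
                gcongr
                exact h1.trans (by gcongr)
            _ = C2 * (ξ * ρ ^ (3 * N)) * ρ ^ N := by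
                rw [hC2]; ring
            _ ≤ _ := by gcongr
        have := norm_integral_le_of_norm_le_const this
        simpa using this
      have h4 := norm_sub_norm_le (∫ x, ee (ξ * φ (ρ ^ (2 * N) * x + t)) ∂μ)
        (∫ x, ee (ξ * (φ g + deriv φ g * (ρ ^ (2 * N) * x + t - g))) ∂μ)
      rw [hnl] at h4
      linarith
    have h5 : ∫ _y, ‖∫ x, ee (ξ * φ (ρ ^ (2 * N) * x + t)) ∂μ‖ ∂μ ≤
        ∫ y, (‖ft μ (ξ * ρ ^ (2 * N) * deriv φ (ρ ^ (2 * N) * y + t))‖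
          + C2 * (ρ⁻¹) ^ 3 * ρ ^ N) ∂μ := by
      apply integral_mono_ae (integrable_const _) (integrable_of_cont hKc hK (by fun_prop))
      filter_upwards [hKae] with y hy using hpt y hy
    simpa using h5
  refine hmain.trans ?_
  rw [integral_add (integrable_of_cont hKc hK (by fun_prop)) (integrable_const _)]
  have h6 := hfm N (fun x => ‖ft μ (ξ * ρ ^ (2 * N) * deriv φ x)‖) (fun x => norm_nonneg _)
    (integrable_of_cont hKc hK (by fun_prop)) (integrable_of_cont hKc hK (by fun_prop))
    (hmom N ξ hξ1 hξ2)
  have h7 : γ ^ N ≤ (max γ ρ) ^ N := by gcongr; exact le_max_left _ _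
  have h8 : ρ ^ N ≤ (max γ ρ) ^ N := by gcongr; exact le_max_right _ _
  have h9 : (1 + C) * γ ^ N ≤ (1 + C) * (max γ ρ) ^ N := by gcongr
  have h10 : C2 * (ρ⁻¹) ^ 3 * ρ ^ N ≤ C2 * (ρ⁻¹) ^ 3 * (max γ ρ) ^ N := by gcongr
  simp only [integral_const, probReal_univ, smul_eq_mul, one_mul]
  linarith

lemma decay {m : ℕ} (hm : 2 ≤ m) {ρ : ℝ} (hρ0 : 0 < ρ) (hρ1 : ρ < 1)
    {a p : Fin m → ℝ} (hp : ∀ j, 0 < p j) (hp1 : ∑ j, p j = 1)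
    {μ : Measure ℝ} [IsProbabilityMeasure μ]
    (hμ : μ = ∑ j : Fin m, ENNReal.ofReal (p j) • Measure.map (fun x => ρ * x + a j) μ)
    {K : Set ℝ} (hKc : IsCompact K) (hKne : K.Nonempty)
    (hKattr : K = ⋃ j : Fin m, (fun x => ρ * x + a j) '' K)
    (hsep : ∀ j j' : Fin m, j ≠ j' →
      Disjoint ((fun x => ρ * x + a j) '' K) ((fun x => ρ * x + a j') '' K))
    {φ : ℝ → ℝ} (hφ : ContDiff ℝ 2 φ) (hφ'' : ∀ t, 0 < deriv (deriv φ) t) :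
    ∃ C > 0, ∃ τ : ℝ, 0 < τ ∧ τ < 1 ∧ ∀ ξ : ℝ, 1 ≤ ξ →
      ‖∫ x, ee (ξ * φ x) ∂μ‖ ≤ C * ξ ^ (-τ) := by
  obtain ⟨C, hC, γ, hγ0, hγ1, h⟩ := decay_aux hm hρ0 hρ1 hp hp1 hμ hKc hKne hKattr hsep hφ hφ''
  set b := (ρ⁻¹) ^ 3 with hb
  have hb1 : 1 < b := one_lt_pow₀ ((one_lt_inv₀ hρ0).2 hρ1) (by norm_num)
  have hb0 : 0 < b := by linarith
  set τ0 := -Real.log γ / Real.log b with hτ0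
  have hlogb : 0 < Real.log b := Real.log_pos hb1
  have hτ00 : 0 < τ0 := div_pos (neg_pos.2 (Real.log_neg hγ0 hγ1)) hlogb
  set τ := min τ0 (1 / 2) with hτ
  have hτpos : 0 < τ := lt_min hτ00 (by norm_num)
  refine ⟨C * γ⁻¹, by positivity, τ, hτpos, lt_of_le_of_lt (min_le_right _ _) (by norm_num),
    fun ξ hξ => ?_⟩
  obtain ⟨N, hN1, hN2⟩ := exists_nat_pow_near hξ hb1
  have hbρ : b ^ N * ρ ^ (3 * N) = 1 := by
    rw [hb, ← pow_mul, ← mul_pow, inv_mul_cancel₀ hρ0.ne', one_pow]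
  have hρN : 0 < ρ ^ (3 * N) := by positivity
  have h1 := h N ξ (by rw [← hbρ]; gcongr) (by
    calc ξ * ρ ^ (3 * N) ≤ b ^ (N + 1) * ρ ^ (3 * N) := by gcongr
      _ = b := by rw [pow_succ, mul_right_comm, hbρ, one_mul])
  refine h1.trans ?_
  have hγb : γ = b ^ (-τ0) := by
    rw [Real.rpow_def_of_pos hb0, hτ0]
    rw [show Real.log b * -(-Real.log γ / Real.log b) = Real.log γ by field_simp, Real.exp_log hγ0]
  have h2 : γ ^ (N + 1) ≤ ξ ^ (-τ) := by
    calc γ ^ (N + 1) = (b ^ (N + 1)) ^ (-τ0) := by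
          conv_lhs => rw [hγb]
          rw [← Real.rpow_natCast, ← Real.rpow_natCast, ← Real.rpow_mul hb0.le,
            ← Real.rpow_mul hb0.le, mul_comm]
      _ ≤ ξ ^ (-τ0) := Real.rpow_le_rpow_of_nonpos (by linarith) hN2.le (by linarith)
      _ ≤ ξ ^ (-τ) := Real.rpow_le_rpow_of_exponent_le hξ (neg_le_neg (min_le_left _ _))
  calc C * γ ^ N = C * γ⁻¹ * γ ^ (N + 1) := by rw [pow_succ]; field_simp
    _ ≤ _ := by gcongr

instance circProb : IsProbabilityMeasure (volume : Measure UnitAddCircle) :=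
  ⟨UnitAddCircle.measure_univ⟩

lemma circ_real : (volume : Measure UnitAddCircle).real Set.univ = 1 := probReal_univ

/-- Empirical averages. -/
noncomputable def avg (y : ℕ → UnitAddCircle) (N : ℕ) (f : C(UnitAddCircle, ℂ)) : ℂ :=
  (N:ℂ)⁻¹ * ∑ n ∈ Finset.Icc 1 N, f (y n)

lemma avg_le (y : ℕ → UnitAddCircle) (N : ℕ) (f : C(UnitAddCircle, ℂ)) : ‖avg y N f‖ ≤ ‖f‖ := by
  unfold avg
  rw [norm_mul, norm_inv, Complex.norm_natCast]
  have h : ‖∑ n ∈ Finset.Icc 1 N, f (y n)‖ ≤ N * ‖f‖ := by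
    refine (norm_sum_le _ _).trans ?_
    refine (Finset.sum_le_sum fun n _ => f.norm_coe_le_norm (y n)).trans ?_
    simp
  rcases Nat.eq_zero_or_pos N with h0 | h0
  · subst h0; simp
  · have : (0:ℝ) < N := by exact_mod_cast h0
    calc (N:ℝ)⁻¹ * ‖∑ n ∈ Finset.Icc 1 N, f (y n)‖ ≤ (N:ℝ)⁻¹ * (N * ‖f‖) := by gcongr
      _ = ‖f‖ := by field_simp

lemma avg_sub (y : ℕ → UnitAddCircle) (N : ℕ) (f g : C(UnitAddCircle, ℂ)) :
    avg y N (f - g) = avg y N f - avg y N g := by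
  simp [avg, Finset.sum_sub_distrib, mul_sub]

lemma circ_int_sub (f g : C(UnitAddCircle, ℂ)) :
    ∫ z, (f - g) z = (∫ z, f z) - ∫ z, g z := by
  have hf : ∀ f : C(UnitAddCircle, ℂ), Integrable f := fun f =>
    f.continuous.integrable_of_hasCompactSupport (HasCompactSupport.of_compactSpace _)
  simpa using integral_sub (hf f) (hf g)

lemma circ_int_le (f : C(UnitAddCircle, ℂ)) : ‖∫ z, f z‖ ≤ ‖f‖ := by
  have := norm_integral_le_of_norm_le_const (μ := (volume : Measure UnitAddCircle)) (f := f)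
    (C := ‖f‖) (ae_of_all _ fun z => f.norm_coe_le_norm z)
  rwa [circ_real, mul_one] at this

lemma avg_tendsto (y : ℕ → UnitAddCircle)
    (h : ∀ k : ℤ, k ≠ 0 → Tendsto (fun N : ℕ => avg y N (fourier k)) atTop (nhds 0))
    (f : C(UnitAddCircle, ℂ)) : Tendsto (fun N : ℕ => avg y N f) atTop (nhds (∫ z, f z)) := by
  have hIntg : ∀ f : C(UnitAddCircle, ℂ), Integrable f := fun f =>
    f.continuous.integrable_of_hasCompactSupport (HasCompactSupport.of_compactSpace _)
  have hspan : ∀ g ∈ Submodule.span ℂ (Set.range (fourier (T := (1:ℝ)))),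
      Tendsto (fun N : ℕ => avg y N g) atTop (nhds (∫ z, g z)) := by
    intro g hg
    induction hg using Submodule.span_induction with
    | mem g hg =>
      obtain ⟨k, rfl⟩ := hg
      by_cases hk : k = 0
      · subst hk
        have h1 : ∫ z : UnitAddCircle, (fourier 0 : C(UnitAddCircle, ℂ)) z = 1 := by
          simp only [fourier_zero]
          rw [integral_const, circ_real, one_smul]
        rw [h1]
        refine tendsto_const_nhds.congr' ?_
        filter_upwards [eventually_gt_atTop 0] with N hN
        have : (N:ℂ) ≠ 0 := by exact_mod_cast hN.ne'
        simp [avg, this]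
      · have h0 : ∫ z : UnitAddCircle, (fourier k : C(UnitAddCircle, ℂ)) z = 0 := by
          have := integral_eq_zero_of_add_right_eq_neg
            (μ := (volume : Measure UnitAddCircle)) (fourier_add_half_inv_index (T := (1:ℝ)) hk one_pos)
          exact this
        rw [h0]
        exact h k hk
    | zero => simp [avg]
    | add f g _ _ hf hg =>
      have h1 : ∫ z, (f + g) z = (∫ z, f z) + ∫ z, g z := by
        simpa using integral_add (hIntg f) (hIntg g)
      rw [h1]
      refine (hf.add hg).congr fun N => ?_
      simp [avg, Finset.sum_add_distrib, mul_add]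
    | smul c f _ hf =>
      have h1 : ∫ z, (c • f) z = c * (∫ z, f z) := by
        simpa using integral_const_mul c f
      rw [h1]
      refine (hf.const_mul c).congr fun N => ?_
      simp [avg, ← Finset.mul_sum]; ring
  have hf : f ∈ (Submodule.span ℂ (Set.range (fourier (T := (1:ℝ))))).topologicalClosure := by
    rw [span_fourier_closure_eq_top]; trivial
  rw [← SetLike.mem_coe, Submodule.topologicalClosure_coe, Metric.mem_closure_iff] at hf
  rw [Metric.tendsto_atTop]
  intro ε hε
  obtain ⟨g, hg, hfg⟩ := hf (ε/3) (by positivity)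
  obtain ⟨N0, hN0⟩ := Metric.tendsto_atTop.1 (hspan g hg) (ε/3) (by positivity)
  refine ⟨N0, fun N hN => ?_⟩
  have h1 := hN0 N hN
  rw [dist_eq_norm] at *
  have h2 := avg_le y N (f - g)
  have h3 := circ_int_le (f - g)
  rw [avg_sub] at h2
  rw [circ_int_sub] at h3
  have : avg y N f - ∫ z, f z = (avg y N f - avg y N g) + (avg y N g - ∫ z, g z)
    - ((∫ z, f z) - ∫ z, g z) := by ring
  rw [this]
  refine (norm_sub_le _ _).trans_lt ?_
  have := norm_add_le (avg y N f - avg y N g) (avg y N g - ∫ z, g z)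
  linarith

lemma circ_point (z : UnitAddCircle) : (volume : Measure UnitAddCircle) {z} = 0 := by
  have := AddCircle.volume_closedBall (T := (1:ℝ)) (x := z) 0
  simpa using this

/-- The circle version of `Icc a b`. -/
def circE (a b : ℝ) : Set UnitAddCircle :=
  {z | ((AddCircle.equivIco (1:ℝ) 0 z : Set.Ico (0:ℝ) (0+1)) : ℝ) ∈ Set.Icc a b}

lemma mem_circE (a b x : ℝ) : ((x : ℝ) : UnitAddCircle) ∈ circE a b ↔ Int.fract x ∈ Set.Icc a b := by
  unfold circE
  rw [Set.mem_ofPred_eq, AddCircle.coe_equivIco_mk_apply]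
  simp

lemma circE_vol (a b : ℝ) (ha : 0 ≤ a) (hab : a ≤ b) (hb : b ≤ 1) :
    (volume : Measure UnitAddCircle) (circE a b) = ENNReal.ofReal (b - a) := by
  have hmeas : MeasurableSet (circE a b) :=
    (measurable_subtype_coe.comp (AddCircle.measurableEquivIco (1:ℝ) 0).measurable) measurableSet_Icc
  rw [AddCircle.add_projection_respects_measure 1 0 hmeas]
  have h : (QuotientAddGroup.mk ⁻¹' (circE a b) ∩ Set.Ioc (0:ℝ) (0+1) : Set ℝ)
      =ᵐ[volume] Set.Icc a b := by
    have h0 : ∀ᵐ x : ℝ, x ≠ 0 ∧ x ≠ 1 := by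
      have h1 : ∀ c : ℝ, ∀ᵐ x : ℝ, x ≠ c := fun c => by
        simp [ae_iff]
      exact (h1 0).and (h1 1)
    filter_upwards [h0] with x hx
    apply propext
    change (((x:ℝ) : UnitAddCircle) ∈ circE a b ∧ x ∈ Set.Ioc (0:ℝ) (0+1)) ↔ x ∈ Set.Icc a b
    rw [mem_circE, zero_add]
    constructor
    · rintro ⟨h1, h2⟩
      rwa [Int.fract_eq_self.2 ⟨h2.1.le, lt_of_le_of_ne h2.2 hx.2⟩] at h1
    · intro h1
      have h2 : 0 ≤ x := ha.trans h1.1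
      have h3 : x < 1 := lt_of_le_of_ne (h1.2.trans hb) hx.2
      exact ⟨by rwa [Int.fract_eq_self.2 ⟨h2, h3⟩], lt_of_le_of_ne h2 (Ne.symm hx.1), h3.le⟩
  rw [measure_congr h, Real.volume_Icc]

lemma circE_frontier (a b : ℝ) (ha : 0 ≤ a) (hb : b ≤ 1) :
    (volume : Measure UnitAddCircle) (frontier (circE a b)) = 0 := by
  have hsub : frontier (circE a b) ⊆ {((0:ℝ):UnitAddCircle)} ∪ {(a:UnitAddCircle)} ∪ {(b:UnitAddCircle)} := by
    intro z hz
    by_contra hcon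
    induction z using QuotientAddGroup.induction_on with | H x => ?_
    change ((x:ℝ):UnitAddCircle) ∈ _ at hz
    change ¬ ((x:ℝ):UnitAddCircle) ∈ _ at hcon
    have hx : ((x:ℝ):UnitAddCircle) = ((Int.fract x : ℝ) : UnitAddCircle) := by
      rw [← AddCircle.coe_fract x]
    rw [hx] at hz hcon
    set t := Int.fract x with ht
    have ht0 : 0 ≤ t := Int.fract_nonneg x
    have ht1 : t < 1 := Int.fract_lt_one x
    have e0 : t ≠ 0 := fun h => hcon (by rw [h]; simp)
    have ea : t ≠ a := fun h => hcon (by rw [h]; simp)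
    have eb : t ≠ b := fun h => hcon (by rw [h]; simp)
    have hopen : ∀ U : Set ℝ, IsOpen U → IsOpen ((fun r : ℝ => (r : UnitAddCircle)) '' U) :=
      fun U hU => QuotientAddGroup.isOpenMap_coe U hU
    by_cases hin : a < t ∧ t < b
    · have : (t : UnitAddCircle) ∈ interior (circE a b) := by
        refine mem_interior.2 ⟨_, ?_, hopen (Set.Ioo a b) isOpen_Ioo, ⟨t, hin, rfl⟩⟩
        rintro _ ⟨r, hr, rfl⟩
        rw [mem_circE, Int.fract_eq_self.2 ⟨ha.trans hr.1.le, hr.2.trans_le hb⟩]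
        exact ⟨hr.1.le, hr.2.le⟩
      exact hz.2 this
    · have hmem : t ∈ Set.Ioo 0 1 ∩ (Set.Icc a b)ᶜ := by
        refine ⟨⟨lt_of_le_of_ne ht0 (Ne.symm e0), ht1⟩, fun h => hin ⟨?_, ?_⟩⟩
        · exact lt_of_le_of_ne h.1 (Ne.symm ea)
        · exact lt_of_le_of_ne h.2 eb
      have h1 := hopen _ ((isOpen_Ioo (a := (0:ℝ)) (b := 1)).inter (isClosed_Icc (a := a) (b := b)).isOpen_compl)
      obtain ⟨w, hw1, hw2⟩ := mem_closure_iff.1 hz.1 _ h1 ⟨t, hmem, rfl⟩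
      obtain ⟨r, hr, rfl⟩ := hw1
      rw [mem_circE, Int.fract_eq_self.2 ⟨hr.1.1.le, hr.1.2⟩] at hw2
      exact hr.2 hw2
  refine measure_mono_null hsub ?_
  rw [measure_union_null_iff, measure_union_null_iff]
  exact ⟨⟨circ_point _, circ_point _⟩, circ_point _⟩

/-- Empirical measure. -/
noncomputable def emp (y : ℕ → UnitAddCircle) (N : ℕ) : Measure UnitAddCircle :=
  ((N + 1 : ℕ) : ℝ≥0∞)⁻¹ • ∑ n ∈ Finset.Icc 1 (N+1), Measure.dirac (y n)

lemma emp_apply (y : ℕ → UnitAddCircle) (N : ℕ) (E : Set UnitAddCircle) (hE : MeasurableSet E)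
    [DecidablePred fun n => y n ∈ E] :
    emp y N E = ((N + 1 : ℕ) : ℝ≥0∞)⁻¹ * (((Finset.Icc 1 (N+1)).filter fun n => y n ∈ E).card : ℝ≥0∞) := by
  simp only [emp, Measure.smul_apply, Measure.finsetSum_apply, smul_eq_mul, Measure.dirac_apply' _ hE]
  congr 1
  simp [Set.indicator_apply]

instance (y : ℕ → UnitAddCircle) (N : ℕ) : IsProbabilityMeasure (emp y N) := ⟨by
  classical
  rw [emp_apply _ _ _ MeasurableSet.univ]
  simp
  exact ENNReal.inv_mul_cancel (by simp) (by finiteness)⟩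

/-- Empirical probability measure. -/
noncomputable def empP (y : ℕ → UnitAddCircle) (N : ℕ) : ProbabilityMeasure UnitAddCircle :=
  ⟨emp y N, inferInstance⟩

/-- Lebesgue measure on the circle. -/
noncomputable def circP : ProbabilityMeasure UnitAddCircle := ⟨volume, circProb⟩

lemma empP_coe (y : ℕ → UnitAddCircle) (N : ℕ) :
    (empP y N : Measure UnitAddCircle) = emp y N := rfl

lemma circP_coe : (circP : Measure UnitAddCircle) = volume := rfl

theorem weyl (x : ℕ → ℝ) (h : ∀ k : ℤ, k ≠ 0 →
    Tendsto (fun N : ℕ => (N:ℂ)⁻¹ * ∑ n ∈ Finset.Icc 1 N, ee (k * x n)) atTop (nhds 0)) :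
    EquidistributedMod1 x := by
  classical
  intro a b ha hab hb
  set y : ℕ → UnitAddCircle := fun n => (x n : UnitAddCircle) with hy
  have h1 := avg_tendsto y (by
    intro k hk
    refine (h k hk).congr fun N => ?_
    unfold avg
    congr 1
    refine Finset.sum_congr rfl fun n _ => ?_
    rw [hy, fourier_coe_apply, ee]
    congr 1; push_cast; ring)
  have hT : Tendsto (empP y) atTop (nhds circP) := by
    rw [ProbabilityMeasure.tendsto_iff_forall_integral_rclike_tendsto ℂ]
    intro f
    have h2 := (tendsto_add_atTop_iff_nat 1).2 (h1 f.toContinuousMap)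
    refine h2.congr fun N => ?_
    simp only [empP_coe, avg]
    unfold emp
    rw [integral_smul_measure, integral_finsetSum_measure, ENNReal.toReal_inv,
      ENNReal.toReal_natCast]
    · simp
    · intro i _
      exact f.integrable _
  have h3 := ProbabilityMeasure.tendsto_measure_of_null_frontier_of_tendsto' hT (E := circE a b)
    (by rw [circP_coe]; exact circE_frontier a b ha hb)
  simp only [empP_coe, circP_coe] at h3
  rw [circE_vol a b ha hab hb] at h3
  have hmeas : MeasurableSet (circE a b) :=
    (measurable_subtype_coe.comp (AddCircle.measurableEquivIco (1:ℝ) 0).measurable) measurableSet_Icc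
  have h4 := (ENNReal.tendsto_toReal ENNReal.ofReal_ne_top).comp h3
  rw [ENNReal.toReal_ofReal (by linarith)] at h4
  rw [← tendsto_add_atTop_iff_nat 1]
  refine h4.congr fun N => ?_
  simp only [Function.comp_apply]
  rw [emp_apply _ _ _ hmeas, ENNReal.toReal_mul, ENNReal.toReal_inv, ENNReal.toReal_natCast,
    ENNReal.toReal_natCast, div_eq_inv_mul]
  simp only [hy, mem_circE]

lemma sum_rpow_le (τ : ℝ) (hτ0 : 0 < τ) (hτ1 : τ < 1) (N : ℕ) :
    ∑ d ∈ Finset.Icc 1 N, (d:ℝ) ^ (-τ) ≤ (N:ℝ) ^ (1 - τ) / (1 - τ) := by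
  have h1 : 0 < 1 - τ := by linarith
  induction N with
  | zero => simp; positivity
  | succ N ih =>
    rw [Finset.sum_Icc_succ_top (by omega)]
    have hN : (0:ℝ) < (N:ℝ) + 1 := by positivity
    have hb := rpow_one_add_le_one_add_mul_self (s := -1 / ((N:ℝ) + 1)) (p := 1 - τ)
      (by rw [le_div_iff₀ hN]; linarith [(Nat.cast_nonneg N : (0:ℝ) ≤ N)]) h1.le (by linarith)
    have he : 1 + -1 / ((N:ℝ) + 1) = N / ((N:ℝ) + 1) := by field_simp; ring
    rw [he, Real.div_rpow (by positivity) hN.le, div_le_iff₀ (by positivity)] at hb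
    have h2 : ((N:ℝ) + 1) ^ (1 - τ) = ((N:ℝ) + 1) ^ (-τ) * ((N:ℝ) + 1) := by
      rw [show 1 - τ = -τ + 1 by ring, Real.rpow_add hN, Real.rpow_one]
    have h3 : (1 + (1 - τ) * (-1 / ((N:ℝ) + 1))) * ((N:ℝ) + 1) ^ (1 - τ)
        = ((N:ℝ) + 1) ^ (1 - τ) - (1 - τ) * ((N:ℝ) + 1) ^ (-τ) := by
      rw [h2]; field_simp; ring
    rw [h3] at hb
    push_cast
    rw [le_div_iff₀ h1] at ih ⊢
    nlinarith

lemma sum_refl (τ : ℝ) (N : ℕ) :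
    ∑ n ∈ Finset.Icc 1 N, (((N + 1 : ℕ) : ℝ) - n) ^ (-τ) = ∑ d ∈ Finset.Icc 1 N, (d:ℝ) ^ (-τ) := by
  refine Finset.sum_nbij' (fun n => N + 1 - n) (fun n => N + 1 - n) ?_ ?_ ?_ ?_ ?_
  · intro n hn; simp at hn ⊢; omega
  · intro n hn; simp at hn ⊢; omega
  · intro n hn; simp at hn ⊢; omega
  · intro n hn; simp at hn ⊢; omega
  · intro n hn
    simp only [Finset.mem_Icc] at hn
    rw [Nat.cast_sub (by omega)]

lemma second_moment (μ : Measure ℝ) [IsProbabilityMeasure μ] (e : ℕ → ℝ → ℂ)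
    (hc : ∀ n, Continuous (e n)) (h1 : ∀ n x, ‖e n x‖ = 1) (C τ : ℝ) (hC : 0 < C) (hτ0 : 0 < τ)
    (hτ1 : τ < 1)
    (h : ∀ n m : ℕ, n < m → ‖∫ x, e n x * (starRingEnd ℂ) (e m x) ∂μ‖ ≤ C * ((m:ℝ) - n) ^ (-τ))
    (N : ℕ) :
    ∫ x, ‖∑ n ∈ Finset.Icc 1 N, e n x‖ ^ 2 ∂μ ≤ N * ((1 + 2 * C / (1 - τ)) * (N:ℝ) ^ (1 - τ)) := by
  have h1τ : 0 < 1 - τ := by linarith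
  have hb : ∀ N x, ‖∑ n ∈ Finset.Icc 1 N, e n x‖ ≤ N := by
    intro N x
    refine (norm_sum_le _ _).trans ?_
    simp [h1]
  have hcS : ∀ N, Continuous fun x => ∑ n ∈ Finset.Icc 1 N, e n x := fun N =>
    continuous_finsetSum _ fun n _ => hc n
  have hconj : ∀ n, Continuous fun x => (starRingEnd ℂ) (e n x) := fun n =>
    Complex.continuous_conj.comp (hc n)
  have hi1 : ∀ n m, Integrable (fun x => e n x * (starRingEnd ℂ) (e m x)) μ := fun n m =>
    Integrable.of_bound ((hc n).mul (hconj m)).aestronglyMeasurable 1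
      (ae_of_all _ fun x => by simp [h1])
  have hi2 : ∀ N, Integrable (fun x => ‖∑ n ∈ Finset.Icc 1 N, e n x‖ ^ 2) μ := fun N =>
    Integrable.of_bound (((hcS N).norm.pow 2)).aestronglyMeasurable ((N:ℝ)^2)
      (ae_of_all _ fun x => by
        rw [Real.norm_of_nonneg (by positivity)]
        exact pow_le_pow_left₀ (norm_nonneg _) (hb N x) 2)
  induction N with
  | zero => simp
  | succ N ih =>
    have hpt : ∀ x, ‖∑ n ∈ Finset.Icc 1 (N+1), e n x‖ ^ 2
        = ‖∑ n ∈ Finset.Icc 1 N, e n x‖ ^ 2 + 1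
          + 2 * (∑ n ∈ Finset.Icc 1 N, e n x * (starRingEnd ℂ) (e (N+1) x)).re := by
      intro x
      rw [Finset.sum_Icc_succ_top (by omega), ← Complex.normSq_eq_norm_sq,
        Complex.normSq_add, Complex.normSq_eq_norm_sq, Complex.normSq_eq_norm_sq, h1,
        Finset.sum_mul]
      ring
    have hi3 : Integrable (fun x => ∑ n ∈ Finset.Icc 1 N, e n x * (starRingEnd ℂ) (e (N+1) x)) μ :=
      integrable_finsetSum _ fun n _ => hi1 n (N+1)
    have hi4 : Integrable (fun x => 2 *
        (∑ n ∈ Finset.Icc 1 N, e n x * (starRingEnd ℂ) (e (N+1) x)).re) μ := hi3.re.const_mul 2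
    have hi5 : Integrable (fun x => ‖∑ n ∈ Finset.Icc 1 N, e n x‖ ^ 2 + 1) μ :=
      (hi2 N).add (integrable_const _)
    simp_rw [hpt]
    rw [integral_add hi5 hi4, integral_add (hi2 N) (integrable_const _), integral_const_mul]
    have h4 : ∫ x, (∑ n ∈ Finset.Icc 1 N, e n x * (starRingEnd ℂ) (e (N+1) x)).re ∂μ
        ≤ C * ((N:ℝ) ^ (1 - τ) / (1 - τ)) := by
      have h5 : ∫ x, (∑ n ∈ Finset.Icc 1 N, e n x * (starRingEnd ℂ) (e (N+1) x)).re ∂μ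
        = (∫ x, ∑ n ∈ Finset.Icc 1 N, e n x * (starRingEnd ℂ) (e (N+1) x) ∂μ).re :=
        integral_re hi3
      rw [h5, integral_finset_sum _ fun n _ => hi1 n (N+1)]
      refine (Complex.re_le_norm _).trans ((norm_sum_le _ _).trans ?_)
      calc _ ≤ ∑ n ∈ Finset.Icc 1 N, C * (((N + 1 : ℕ) : ℝ) - n) ^ (-τ) := by
            refine Finset.sum_le_sum fun n hn => h n (N+1) ?_
            simp at hn; omega
        _ = C * ∑ d ∈ Finset.Icc 1 N, (d:ℝ) ^ (-τ) := by rw [← Finset.mul_sum, sum_refl]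
        _ ≤ _ := by gcongr; exact sum_rpow_le τ hτ0 hτ1 N
    have h6 : (N:ℝ) ^ (1 - τ) ≤ ((N + 1 : ℕ):ℝ) ^ (1 - τ) :=
      Real.rpow_le_rpow (by positivity) (by push_cast; linarith) h1τ.le
    have h7 : 1 ≤ ((N + 1 : ℕ):ℝ) ^ (1 - τ) :=
      Real.one_le_rpow (by push_cast; linarith [(Nat.cast_nonneg N : (0:ℝ) ≤ N)]) h1τ.le
    set X := (N:ℝ) ^ (1 - τ)
    set Y := ((N + 1 : ℕ):ℝ) ^ (1 - τ)
    set D := C / (1 - τ) with hD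
    have hD0 : 0 < D := by positivity
    have e1 : 2 * C / (1 - τ) = 2 * D := by rw [hD]; ring
    have e2 : C * (X / (1 - τ)) = D * X := by rw [hD]; ring
    rw [e1] at ih ⊢
    rw [e2] at h4
    have e3 : ∫ _ : ℝ, (1:ℝ) ∂μ = 1 := by simp
    rw [e3]
    have h8 : (N:ℝ) * ((1 + 2 * D) * X) ≤ N * ((1 + 2 * D) * Y) := by gcongr
    have h9 : D * X ≤ D * Y := by gcongr
    push_cast
    nlinarith

lemma ae_tendsto_of_summable (μ : Measure ℝ) (g : ℕ → ℝ → ℝ)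
    (hg0 : ∀ k x, 0 ≤ g k x) (hgi : ∀ k, Integrable (g k) μ) (B : ℕ → ℝ) (hB : Summable B)
    (hgB : ∀ k, ∫ x, g k x ∂μ ≤ B k) :
    ∀ᵐ x ∂μ, Tendsto (fun k => g k x) atTop (nhds 0) := by
  have hB0 : ∀ k, 0 ≤ B k := fun k => (integral_nonneg (hg0 k)).trans (hgB k)
  have h1 : ∫⁻ x, ∑' k, ENNReal.ofReal (g k x) ∂μ ≠ ∞ := by
    rw [lintegral_tsum fun k => (hgi k).aestronglyMeasurable.aemeasurable.ennreal_ofReal]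
    have h2 : ∀ k, ∫⁻ x, ENNReal.ofReal (g k x) ∂μ ≤ ENNReal.ofReal (B k) := fun k => by
      rw [← ofReal_integral_eq_lintegral_ofReal (hgi k) (ae_of_all _ (hg0 k))]
      exact ENNReal.ofReal_le_ofReal (hgB k)
    refine ne_top_of_le_ne_top ?_ (ENNReal.tsum_le_tsum h2)
    rw [← ENNReal.ofReal_tsum_of_nonneg hB0 hB]
    exact ENNReal.ofReal_ne_top
  have h3 := ae_lt_top' (AEMeasurable.ennreal_tsum
    fun k => (hgi k).aestronglyMeasurable.aemeasurable.ennreal_ofReal) h1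
  filter_upwards [h3] with x hx
  have h4 := ENNReal.tendsto_atTop_zero_of_tsum_ne_top hx.ne
  have h5 := (ENNReal.tendsto_toReal ENNReal.zero_ne_top).comp h4
  simp only [ENNReal.toReal_zero] at h5
  refine h5.congr fun k => ?_
  simp [ENNReal.toReal_ofReal (hg0 k x)]

lemma gap_fill (u : ℕ → ℂ) (hu : ∀ n, ‖u n‖ = 1) (A : ℕ) (hA : A ≠ 0)
    (h : Tendsto (fun k : ℕ => ‖∑ n ∈ Finset.Icc 1 ((k+1)^A), u n‖ ^ 2 / (((k+1)^A : ℕ) : ℝ) ^ 2)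
      atTop (nhds 0)) :
    Tendsto (fun N : ℕ => (N:ℂ)⁻¹ * ∑ n ∈ Finset.Icc 1 N, u n) atTop (nhds 0) := by
  set S : ℕ → ℂ := fun N => ∑ n ∈ Finset.Icc 1 N, u n with hS
  have h1 : Tendsto (fun k : ℕ => ‖S (k^A)‖ / ((k^A : ℕ) : ℝ)) atTop (nhds 0) := by
    rw [← tendsto_add_atTop_iff_nat 1]
    have := (Real.continuous_sqrt.tendsto 0).comp h
    rw [Real.sqrt_zero] at this
    refine this.congr fun k => ?_
    simp only [Function.comp_apply]
    rw [← div_pow, Real.sqrt_sq (by positivity)]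
  have h2 : Tendsto (fun k : ℕ => (1 + 1 / (k:ℝ)) ^ A - 1) atTop (nhds 0) := by
    have := ((tendsto_one_div_atTop_nhds_zero_nat (𝕜 := ℝ)).const_add 1).pow A
    simpa using this.sub_const 1
  have h3 : Tendsto (fun N => Nat.nthRoot A N) atTop atTop := by
    rw [tendsto_atTop]
    intro b
    filter_upwards [eventually_ge_atTop (b ^ A)] with N hN
    exact (Nat.le_nthRoot_iff hA).2 hN
  have h4 := (h1.add h2).comp h3
  rw [add_zero] at h4
  refine squeeze_zero_norm' ?_ h4
  filter_upwards [eventually_ge_atTop 1] with N hN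
  simp only [Function.comp_apply]
  set k := Nat.nthRoot A N with hk
  have hk1 : 1 ≤ k := (Nat.le_nthRoot_iff hA).2 (by simpa using hN)
  have hkN : k ^ A ≤ N := (Nat.le_nthRoot_iff hA).1 le_rfl
  have hNk : N < (k+1)^A := Nat.lt_pow_nthRoot_add_one hA N
  have hkA : (0:ℝ) < ((k^A : ℕ) : ℝ) := by positivity
  have hkN' : ((k^A : ℕ) : ℝ) ≤ N := by exact_mod_cast hkN
  have h5 : ‖S N‖ ≤ ‖S (k^A)‖ + (N - ((k^A : ℕ) : ℝ)) := by
    have : ∀ d M : ℕ, ‖S (M + d)‖ ≤ ‖S M‖ + d := by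
      intro d M
      induction d with
      | zero => simp
      | succ d ih =>
        have : S (M + (d+1)) = S (M + d) + u (M + d + 1) := by
          simp only [hS]
          rw [← add_assoc, Finset.sum_Icc_succ_top (by omega)]
        rw [this]
        refine (norm_add_le _ _).trans ?_
        rw [hu]; push_cast; linarith
    have h6 := this (N - k^A) (k^A)
    rwa [Nat.add_sub_cancel' hkN, Nat.cast_sub hkN] at h6
  rw [norm_mul, norm_inv, Complex.norm_natCast]
  have h7 : (1 + 1 / (k:ℝ)) ^ A = (((k+1)^A : ℕ) : ℝ) / ((k^A : ℕ) : ℝ) := by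
    have : (k:ℝ) ≠ 0 := by positivity
    push_cast
    rw [← div_pow]; congr 1; field_simp
  rw [h7]
  have hNk' : (N:ℝ) ≤ (((k+1)^A : ℕ) : ℝ) := by exact_mod_cast hNk.le
  calc (N:ℝ)⁻¹ * ‖S N‖ ≤ (((k^A : ℕ) : ℝ))⁻¹ * (‖S (k^A)‖ + ((((k+1)^A : ℕ) : ℝ) - ((k^A : ℕ) : ℝ))) := by
        refine mul_le_mul ?_ (h5.trans (by linarith)) (norm_nonneg _) (by positivity)
        exact inv_anti₀ hkA hkN'
    _ = _ := by field_simp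

lemma ae_avg (μ : Measure ℝ) [IsProbabilityMeasure μ] (e : ℕ → ℝ → ℂ)
    (hc : ∀ n, Continuous (e n)) (h1 : ∀ n x, ‖e n x‖ = 1) (C τ : ℝ) (hC : 0 < C) (hτ0 : 0 < τ)
    (hτ1 : τ < 1)
    (h : ∀ n m : ℕ, n < m → ‖∫ x, e n x * (starRingEnd ℂ) (e m x) ∂μ‖ ≤ C * ((m:ℝ) - n) ^ (-τ)) :
    ∀ᵐ x ∂μ, Tendsto (fun N : ℕ => (N:ℂ)⁻¹ * ∑ n ∈ Finset.Icc 1 N, e n x) atTop (nhds 0) := by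
  obtain ⟨A, hA⟩ := exists_nat_ge (2 / τ)
  have hA0 : A ≠ 0 := by
    rintro rfl
    have : 0 < 2 / τ := by positivity
    simp at hA; linarith
  rw [div_le_iff₀ hτ0] at hA
  set D := 1 + 2 * C / (1 - τ) with hD
  have h1τ : 0 < 1 - τ := by linarith
  have hD0 : 0 < D := by positivity
  have hb : ∀ N x, ‖∑ n ∈ Finset.Icc 1 N, e n x‖ ≤ N := by
    intro N x
    refine (norm_sum_le _ _).trans ?_
    simp [h1]
  have hcS : ∀ N, Continuous fun x => ∑ n ∈ Finset.Icc 1 N, e n x := fun N =>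
    continuous_finsetSum _ fun n _ => hc n
  have hi2 : ∀ N, Integrable (fun x => ‖∑ n ∈ Finset.Icc 1 N, e n x‖ ^ 2) μ := fun N =>
    Integrable.of_bound (((hcS N).norm.pow 2)).aestronglyMeasurable ((N:ℝ)^2)
      (ae_of_all _ fun x => by
        rw [Real.norm_of_nonneg (by positivity)]
        exact pow_le_pow_left₀ (norm_nonneg _) (hb N x) 2)
  have hae := ae_tendsto_of_summable μ
    (fun k x => ‖∑ n ∈ Finset.Icc 1 ((k+1)^A), e n x‖ ^ 2 / (((k+1)^A : ℕ) : ℝ) ^ 2)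
    (fun k x => by positivity) (fun k => (hi2 _).div_const _)
    (fun k => D * (1 / ((k + 1 : ℕ) : ℝ) ^ 2))
    (((summable_nat_add_iff 1).2 (Real.summable_one_div_nat_pow.2 (by norm_num))).mul_left D)
    (by
      intro k
      rw [integral_div]
      have h2 := second_moment μ e hc h1 C τ hC hτ0 hτ1 h ((k+1)^A)
      set N := (k+1)^A with hN
      have hN0 : (0:ℝ) < N := by rw [hN]; positivity
      have hk0 : (0:ℝ) < ((k+1 : ℕ):ℝ) := by positivity
      have hk1 : (1:ℝ) ≤ ((k+1 : ℕ):ℝ) := by exact_mod_cast Nat.succ_le_succ (Nat.zero_le k)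
      have e1 : (N:ℝ) ^ (1 - τ) = N * (N:ℝ) ^ (-τ) := by
        rw [sub_eq_add_neg, Real.rpow_add hN0, Real.rpow_one]
      have e2 : (N:ℝ) ^ (-τ) ≤ 1 / ((k + 1 : ℕ) : ℝ) ^ 2 := by
        have : (N:ℝ) = (((k+1 : ℕ):ℝ)) ^ (A:ℝ) := by rw [hN, Real.rpow_natCast]; push_cast; rfl
        rw [this, ← Real.rpow_mul hk0.le, one_div, ← Real.rpow_natCast, ← Real.rpow_neg hk0.le]
        exact Real.rpow_le_rpow_of_exponent_le hk1 (by push_cast; linarith)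
      rw [div_le_iff₀ (by positivity)]
      refine h2.trans ?_
      rw [e1]
      calc (N:ℝ) * (D * (N * (N:ℝ) ^ (-τ))) = D * (N:ℝ) ^ (-τ) * (N:ℝ)^2 := by ring
        _ ≤ D * (1 / ((k + 1 : ℕ) : ℝ) ^ 2) * (N:ℝ)^2 := by gcongr)
  filter_upwards [hae] with x hx
  exact gap_fill (fun n => e n x) (fun n => h1 n x) A hA0 hx

lemma ae_equidist (μ : Measure ℝ) [IsProbabilityMeasure μ] (φ : ℝ → ℝ) (hφ : Continuous φ)
    (hdec : ∃ C > 0, ∃ τ : ℝ, 0 < τ ∧ τ < 1 ∧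
      ∀ ξ : ℝ, 1 ≤ ξ → ‖∫ x, ee (ξ * φ x) ∂μ‖ ≤ C * ξ ^ (-τ))
    (s : ℕ → ℕ) (hs : StrictMono s) :
    ∀ᵐ x ∂μ, EquidistributedMod1 (fun n => (s n : ℝ) * φ x) := by
  obtain ⟨C, hC, τ, hτ0, hτ1, hdec⟩ := hdec
  have hdec' : ∀ ξ D : ℝ, 1 ≤ D → D ≤ |ξ| → ‖∫ x, ee (ξ * φ x) ∂μ‖ ≤ C * D ^ (-τ) := by
    intro ξ D hD hξ
    have h1 : ‖∫ x, ee (ξ * φ x) ∂μ‖ = ‖∫ x, ee (|ξ| * φ x) ∂μ‖ := by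
      rcases abs_choice ξ with h | h
      · rw [h]
      · rw [h]
        have : ∫ x, ee (-ξ * φ x) ∂μ = (starRingEnd ℂ) (∫ x, ee (ξ * φ x) ∂μ) := by
          rw [← integral_conj]
          simp_rw [ee_conj, neg_mul]
        rw [this, RCLike.norm_conj]
    rw [h1]
    refine (hdec |ξ| (hD.trans hξ)).trans ?_
    exact mul_le_mul_of_nonneg_left
      (Real.rpow_le_rpow_of_nonpos (by linarith) hξ (by linarith)) hC.le
  have hall : ∀ᵐ x ∂μ, ∀ k : ℤ, k ≠ 0 → Tendsto (fun N : ℕ =>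
      (N:ℂ)⁻¹ * ∑ n ∈ Finset.Icc 1 N, ee (k * ((s n : ℝ) * φ x))) atTop (nhds 0) := by
    rw [ae_all_iff]
    intro k
    by_cases hk : k = 0
    · exact ae_of_all _ fun x h => absurd hk h
    have := ae_avg μ (fun n x => ee (k * ((s n : ℝ) * φ x)))
      (fun n => ee_cont.comp (by fun_prop)) (fun n x => ee_norm _) C τ hC hτ0 hτ1 (by
        intro n m hnm
        have hsm : (m:ℝ) - n ≤ (s m : ℝ) - s n := by
          have : ∀ d, n + d ≤ m → s n + d ≤ s (n + d) := by
            intro d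
            induction d with
            | zero => simp
            | succ d ih =>
              intro hd
              have h1 := ih (by omega)
              have h2 : s (n + d) < s (n + (d+1)) := hs (by omega)
              omega
          have h3 := this (m - n) (by omega)
          rw [Nat.add_sub_cancel' hnm.le] at h3
          have h4 : (s n : ℝ) + ((m - n : ℕ) : ℝ) ≤ s m := by exact_mod_cast h3
          rw [Nat.cast_sub hnm.le] at h4
          linarith
        have hmn : (1:ℝ) ≤ (m:ℝ) - n := by
          have : (n:ℝ) + 1 ≤ m := by exact_mod_cast hnm
          linarith
        have hk1 : (1:ℝ) ≤ |(k:ℝ)| := by exact_mod_cast Int.one_le_abs hk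
        have := hdec' (k * ((s n : ℝ) - s m)) ((m:ℝ) - n) hmn (by
          rw [abs_mul, abs_sub_comm, abs_of_nonneg (by linarith : (0:ℝ) ≤ (s m : ℝ) - s n)]
          nlinarith)
        refine le_of_eq_of_le ?_ this
        congr 2
        funext x
        rw [ee_conj, ← ee_add]
        congr 1; ring)
    filter_upwards [this] with x hx _
    exact hx
  filter_upwards [hall] with x hx
  exact weyl _ hx

/-- for the homogeneous self-similar measure `μ` (with strong separation) and a
`C²` map `φ` with `φ'' > 0`, for every strictly increasing sequence of positive integers
`(s n)`, for `μ`-a.e. `x` the sequence `(s n * φ x)` is equidistributed mod 1; in particular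
for `μ`-a.e. `x`, `φ x` is normal in every integer base `b ≥ 2`. -/
theorem stmt5
    (m : ℕ) (hm : 2 ≤ m) (ρ : ℝ) (hρ0 : 0 < ρ) (hρ1 : ρ < 1)
    (a : Fin m → ℝ) (p : Fin m → ℝ) (hp : ∀ j, 0 < p j) (hp1 : ∑ j, p j = 1)
    (μ : Measure ℝ) [IsProbabilityMeasure μ]
    (hμ : μ = ∑ j : Fin m, ENNReal.ofReal (p j) • Measure.map (fun x => ρ * x + a j) μ)
    (K : Set ℝ) (hKc : IsCompact K) (hKne : K.Nonempty)
    (hKattr : K = ⋃ j : Fin m, (fun x => ρ * x + a j) '' K)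
    (hsep : ∀ j j' : Fin m, j ≠ j' →
      Disjoint ((fun x => ρ * x + a j) '' K) ((fun x => ρ * x + a j') '' K))
    (φ : ℝ → ℝ) (hφ : ContDiff ℝ 2 φ) (hφ'' : ∀ t, 0 < deriv (deriv φ) t) :
    (∀ s : ℕ → ℕ, StrictMono s → (∀ n, 0 < s n) →
      ∀ᵐ x ∂μ, EquidistributedMod1 (fun n => (s n : ℝ) * φ x)) ∧
    (∀ᵐ x ∂μ, ∀ b : ℕ, 2 ≤ b →
      EquidistributedMod1 (fun n => (b : ℝ) ^ n * φ x)) := by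
  have hdec := decay hm hρ0 hρ1 hp hp1 hμ hKc hKne hKattr hsep hφ hφ''
  have h1 : ∀ s : ℕ → ℕ, StrictMono s → (∀ n, 0 < s n) →
      ∀ᵐ x ∂μ, EquidistributedMod1 (fun n => (s n : ℝ) * φ x) :=
    fun s hs _ => ae_equidist μ φ hφ.continuous hdec s hs
  refine ⟨h1, ?_⟩
  rw [ae_all_iff]
  intro b
  by_cases hb : 2 ≤ b
  · have h2 := h1 (fun n => b ^ n) (fun i j hij => Nat.pow_lt_pow_right (by omega) hij)
      (fun n => by positivity)
    filter_upwards [h2] with x hx _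
    simpa using hx
  · exact ae_of_all _ fun x h => absurd h hb
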